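/- Nondegeneracy on Kirchhoff stream functions, II. Define for ξ > 0 the function Ψ^ξ : ℝ² → ℝ by Ψ^ξ(x) = (1/2π)∫_{E^ξ} log‖x−y‖ dy − Ω^ξ‖x‖²/2. There exists an at most countable set 𝒩 ⊆ (0,∞) such that for every ξ ∈ (0,∞) ∖ 𝒩 the following holds: if φ : Σ^ξ → ℝ is continuous, satisfies the 2-fold dihedral symmetry φ(x₁,x₂) = φ(x₁,−x₂) = φ(−x₁,−x₂) for all (x₁,x₂) ∈ Σ^ξ, and satisfies φ(x) + ∫_{Σ^ξ} (1/2π) log‖x−y‖ · (φ(y)/‖∇Ψ^ξ(y)‖) dℋ¹(y) = 0 for all x ∈ Σ^ξ, then φ is identically zero. -/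

import Mathlib

open MeasureTheory Real

noncomputable section

/-- The Euclidean plane. -/
abbrev Pt := EuclideanSpace ℝ (Fin 2)

/-- The point of the plane with the given coordinates. -/
def pt (a b : ℝ) : Pt := (WithLp.equiv 2 (Fin 2 → ℝ)).symm ![a, b]

/-- The open ellipse `E^ξ = {x : x₁² + (x₂ / tanh ξ)² < 1}`. -/
def Eell (ξ : ℝ) : Set Pt := {x : Pt | (x 0) ^ 2 + (x 1 / Real.tanh ξ) ^ 2 < 1}

/-- The angular velocity `Ω^ξ = tanh ξ / (1 + tanh ξ)²` of the `ξ`-Kirchhoff vortex. -/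
def Ωell (ξ : ℝ) : ℝ := Real.tanh ξ / (1 + Real.tanh ξ) ^ 2

/-- The elliptical coordinates map
`(ζ, η) ↦ (sech ξ · cosh ζ · cos η, sech ξ · sinh ζ · sin η)`. -/
def ept (ξ ζ η : ℝ) : Pt :=
  pt ((Real.cosh ξ)⁻¹ * Real.cosh ζ * Real.cos η)
    ((Real.cosh ξ)⁻¹ * Real.sinh ζ * Real.sin η)

/-- The relative stream function of the `ξ`-Kirchhoff vortex (without the
additive normalization constant). -/
def Ψell (ξ : ℝ) (x : Pt) : ℝ :=
  (1 / (2 * π)) * (∫ y in Eell ξ, Real.log ‖x - y‖) - Ωell ξ * ‖x‖ ^ 2 / 2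


/-- parametrization of the ellipse -/
def gam (b t : ℝ) : Pt := pt (Real.cos t) (b * Real.sin t)

/-- speed of the parametrization -/
def spd (b t : ℝ) : ℝ := Real.sqrt (Real.sin t ^ 2 + b ^ 2 * Real.cos t ^ 2)

/-- inverse of the parametrization -/
def ang (b : ℝ) (x : Pt) : ℝ := Complex.arg ((x 0 : ℂ) + (x 1 / b : ℝ) * Complex.I)

lemma tanh_pos_of_pos {ξ : ℝ} (hξ : 0 < ξ) : 0 < Real.tanh ξ := by
  rw [Real.tanh_eq_sinh_div_cosh]
  exact div_pos (Real.sinh_pos_iff.mpr hξ) (Real.cosh_pos ξ)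

lemma tanh_lt_one' (ξ : ℝ) : Real.tanh ξ < 1 := by
  rw [Real.tanh_eq_sinh_div_cosh, div_lt_one (Real.cosh_pos ξ)]
  exact Real.sinh_lt_cosh ξ

@[simp] lemma pt_zero (a b : ℝ) : (pt a b) 0 = a := rfl
@[simp] lemma pt_one (a b : ℝ) : (pt a b) 1 = b := rfl

lemma pt_eta (x : Pt) : pt (x 0) (x 1) = x := by
  ext i; fin_cases i <;> rfl

lemma norm_pt (a b : ℝ) : ‖pt a b‖ = Real.sqrt (a ^ 2 + b ^ 2) := by
  rw [EuclideanSpace.norm_eq]; simp [Fin.sum_univ_two]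

lemma pt_sub (a b c d : ℝ) : pt a b - pt c d = pt (a - c) (b - d) := by
  ext i; fin_cases i <;> rfl

lemma spd_pos {b : ℝ} (hb : 0 < b) (t : ℝ) : 0 < spd b t := by
  apply Real.sqrt_pos.mpr
  by_cases h : Real.sin t = 0
  · have : Real.cos t ^ 2 = 1 := by have := Real.sin_sq_add_cos_sq t; rw [h] at this; linarith
    rw [this]; positivity
  · positivity

lemma continuous_spd (b : ℝ) : Continuous (spd b) := by unfold spd; fun_prop

lemma continuous_pt {α : Type*} [TopologicalSpace α] {f g : α → ℝ} (hf : Continuous f)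
    (hg : Continuous g) : Continuous fun a => pt (f a) (g a) := by
  have : Continuous fun a => ![f a, g a] := by
    refine continuous_pi fun i => ?_
    fin_cases i <;> simpa
  exact (PiLp.continuous_toLp 2 _).comp this

lemma continuous_gam (b : ℝ) : Continuous (gam b) :=
  continuous_pt (by fun_prop) (by fun_prop)

lemma norm_gam_sub (b s t : ℝ) :
    ‖gam b s - gam b t‖ = 2 * |Real.sin ((s - t) / 2)| * spd b ((s + t) / 2) := by
  unfold gam spd
  rw [pt_sub, norm_pt, ← mul_sub, Real.cos_sub_cos, Real.sin_sub_sin]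
  have : (2 : ℝ) * |Real.sin ((s - t) / 2)| = Real.sqrt ((2 * Real.sin ((s - t) / 2)) ^ 2) := by
    rw [Real.sqrt_sq_eq_abs, abs_mul]; simp
  rw [this, ← Real.sqrt_mul (by positivity)]
  congr 1; ring

/-- the ellipse curve as a level set -/
lemma mem_frontier_iff {ξ : ℝ} (hξ : 0 < ξ) (x : Pt) :
    x ∈ frontier (Eell ξ) ↔ (x 0) ^ 2 + (x 1 / Real.tanh ξ) ^ 2 = 1 := by
  have hc : Continuous fun x : Pt => (x 0) ^ 2 + (x 1 / Real.tanh ξ) ^ 2 := by fun_prop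
  constructor
  · intro h
    exact frontier_lt_subset_eq hc continuous_const h
  · intro h
    have ho : IsOpen (Eell ξ) := isOpen_lt hc continuous_const
    rw [ho.frontier_eq]
    refine ⟨?_, fun h' => ?_⟩
    · have ht : Filter.Tendsto (fun n : ℕ => (1 - 1 / ((n : ℝ) + 1)) • x) Filter.atTop
          (nhds x) := by
        have h1 : Filter.Tendsto (fun n : ℕ => (1 - 1 / ((n : ℝ) + 1))) Filter.atTop
            (nhds (1 - 0)) := tendsto_const_nhds.sub tendsto_one_div_add_atTop_nhds_zero_nat
        simpa using h1.smul_const x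
      refine mem_closure_of_tendsto ht (Filter.Eventually.of_forall fun n => ?_)
      have h2 : (0 : ℝ) < 1 / ((n : ℝ) + 1) := by positivity
      have h3 : 1 / ((n : ℝ) + 1) ≤ 1 := by
        rw [div_le_one (by positivity)]; linarith [n.cast_nonneg (α := ℝ)]
      set r := 1 / ((n : ℝ) + 1)
      simp only [Eell, Set.mem_ofPred_eq, PiLp.smul_apply, smul_eq_mul]
      have : ((1 - r) * x 0) ^ 2 + ((1 - r) * x 1 / Real.tanh ξ) ^ 2
        = (1 - r) ^ 2 * ((x 0) ^ 2 + (x 1 / Real.tanh ξ) ^ 2) := by ring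
      rw [this, h]; nlinarith
    · have : (x 0) ^ 2 + (x 1 / Real.tanh ξ) ^ 2 < 1 := h'
      linarith

lemma gam_mem {ξ : ℝ} (hξ : 0 < ξ) (t : ℝ) : gam (Real.tanh ξ) t ∈ frontier (Eell ξ) := by
  rw [mem_frontier_iff hξ]
  have : 0 < Real.tanh ξ := tanh_pos_of_pos hξ
  simp only [gam, pt_zero, pt_one]
  rw [mul_div_cancel_left₀ _ this.ne']
  exact Real.cos_sq_add_sin_sq t

lemma ang_gam {b : ℝ} (hb : 0 < b) {t : ℝ} (ht : t ∈ Set.Ioc (-π) π) : ang b (gam b t) = t := by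
  simp only [ang, gam, pt_zero, pt_one]
  rw [mul_div_cancel_left₀ _ hb.ne']
  have := Complex.arg_cos_add_sin_mul_I ht
  simpa using this

lemma ang_mem (b : ℝ) (x : Pt) : ang b x ∈ Set.Ioc (-π) π := Complex.arg_mem_Ioc _

lemma gam_ang {ξ : ℝ} (hξ : 0 < ξ) {x : Pt} (hx : x ∈ frontier (Eell ξ)) :
    gam (Real.tanh ξ) (ang (Real.tanh ξ) x) = x := by
  have hb : 0 < Real.tanh ξ := tanh_pos_of_pos hξ
  rw [mem_frontier_iff hξ] at hx
  set b := Real.tanh ξ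
  set z : ℂ := (x 0 : ℂ) + (x 1 / b : ℝ) * Complex.I with hz
  have hn : ‖z‖ = 1 := by
    rw [Complex.norm_add_mul_I, hx, Real.sqrt_one]
  have h0 : z ≠ 0 := by intro h; rw [h] at hn; simp at hn
  have e1 : Real.cos (ang b x) = x 0 := by
    change Real.cos (Complex.arg z) = _
    rw [Complex.cos_arg h0, hn]; simp [hz]
  have e2 : Real.sin (ang b x) = x 1 / b := by
    change Real.sin (Complex.arg z) = _
    rw [Complex.sin_arg, hn]; simp [hz]
  rw [gam, e1, e2, mul_div_cancel₀ _ hb.ne']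
  exact pt_eta x

lemma measurable_ang (b : ℝ) : Measurable (ang b) := by
  apply Complex.measurable_arg.comp
  fun_prop

lemma isClosed_frontier' (ξ : ℝ) : MeasurableSet (frontier (Eell ξ)) :=
  isClosed_frontier.measurableSet


/-- local comparison of measures on the line -/
lemma measure_le_of_local (m n : Measure ℝ)
    (h : ∀ t : ℝ, ∃ U ∈ nhds t, ∀ A : Set ℝ, MeasurableSet A → A ⊆ U → m A ≤ n A) : m ≤ n := by
  choose U hU hA using h
  obtain ⟨s, hs, hcov⟩ := TopologicalSpace.countable_cover_nhds (fun t => interior_mem_nhds.mpr (hU t))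
  refine Measure.le_iff.mpr fun A hAm => ?_
  have hne : s.Nonempty := by
    by_contra hne
    rw [Set.not_nonempty_iff_eq_empty] at hne
    subst hne
    simp at hcov
    exact Set.empty_ne_univ hcov
  obtain ⟨e, he⟩ := hs.exists_eq_range hne
  have hm : ∀ k, MeasurableSet (interior (U (e k))) := fun k => isOpen_interior.measurableSet
  have hcov' : ⋃ k, disjointed (fun k => interior (U (e k))) k = Set.univ := by
    rw [iUnion_disjointed, ← hcov, he, Set.biUnion_range]
  have hd : Pairwise (Function.onFun Disjoint
      (fun k => A ∩ disjointed (fun k => interior (U (e k))) k)) := fun i j hij =>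
    ((disjoint_disjointed _ hij).mono Set.inter_subset_right Set.inter_subset_right)
  have hmd : ∀ k, MeasurableSet (A ∩ disjointed (fun k => interior (U (e k))) k) := fun k =>
    hAm.inter (MeasurableSet.disjointed hm k)
  have hAe : A = ⋃ k, (A ∩ disjointed (fun k => interior (U (e k))) k) := by
    rw [← Set.inter_iUnion, hcov', Set.inter_univ]
  rw [hAe, measure_iUnion hd hmd, measure_iUnion hd hmd]
  refine ENNReal.tsum_le_tsum fun k => hA (e k) _ (hmd k) ?_
  exact Set.inter_subset_right.trans ((disjointed_subset _ _).trans interior_subset)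

lemma hasStrictDerivAt_gam (b t : ℝ) :
    HasStrictDerivAt (gam b) (pt (-Real.sin t) (b * Real.cos t)) t := by
  have h1 : HasStrictDerivAt (fun t => (![Real.cos t, b * Real.sin t] : Fin 2 → ℝ))
      ![-Real.sin t, b * Real.cos t] t := by
    rw [hasStrictDerivAt_pi]
    intro i
    fin_cases i
    · simpa using Real.hasStrictDerivAt_cos t
    · simpa using (Real.hasStrictDerivAt_sin t).const_mul b
  have h2 := ((PiLp.continuousLinearEquiv 2 ℝ (fun _ : Fin 2 => ℝ)).symm
    : (Fin 2 → ℝ) →L[ℝ] Pt).hasStrictFDerivAt.comp_hasStrictDerivAt t h1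
  exact h2

lemma norm_deriv_gam (b t : ℝ) : ‖pt (-Real.sin t) (b * Real.cos t)‖ = spd b t := by
  rw [norm_pt, spd]; congr 1; ring

lemma gam_local (b t₀ : ℝ) {δ : ℝ} (hδ : 0 < δ) : ∃ U ∈ nhds t₀, ∀ s ∈ U, ∀ t ∈ U,
    (spd b t₀ - δ) * |s - t| ≤ ‖gam b s - gam b t‖ ∧
    ‖gam b s - gam b t‖ ≤ (spd b t₀ + δ) * |s - t| ∧
    spd b s ≤ spd b t₀ + δ ∧ spd b t₀ - δ ≤ spd b s := by
  have h1 := (hasStrictDerivAt_gam b t₀).hasStrictFDerivAt.isLittleO.def hδ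
  rw [nhds_prod_eq] at h1
  obtain ⟨U, hU, h⟩ := (Filter.eventually_prod_self_iff (r := fun s t => ‖gam b s - gam b t -
    (ContinuousLinearMap.toSpanSingleton ℝ (pt (-sin t₀) (b * cos t₀))) (s - t)‖ ≤ δ * ‖s - t‖)).mp h1
  have h2 := (continuous_spd b).tendsto t₀ (Metric.ball_mem_nhds _ hδ)
  refine ⟨U ∩ spd b ⁻¹' Metric.ball (spd b t₀) δ, Filter.inter_mem hU h2, ?_⟩
  rintro s ⟨hs, hs'⟩ t ⟨ht, ht'⟩
  have h3 := h s hs t ht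
  simp only [ContinuousLinearMap.toSpanSingleton_apply, Real.norm_eq_abs] at h3
  set v := pt (-Real.sin t₀) (b * Real.cos t₀) with hv
  have h4 : ‖(s - t) • v‖ = spd b t₀ * |s - t| := by
    rw [norm_smul, hv, norm_deriv_gam, Real.norm_eq_abs, mul_comm]
  have h5 := norm_sub_norm_le ((s - t) • v) (gam b s - gam b t)
  have h6 := norm_sub_norm_le (gam b s - gam b t) ((s - t) • v)
  rw [norm_sub_rev ((s - t) • v)] at h5
  simp only [Set.mem_preimage, Metric.mem_ball, Real.dist_eq, abs_lt] at hs'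
  refine ⟨by linarith, by linarith, by linarith, by linarith⟩

/-- the parameter interval -/
def Iv : Set ℝ := Set.Ioc (-π) π

lemma image_eq {ξ : ℝ} (hξ : 0 < ξ) (A : Set ℝ) :
    ang (Real.tanh ξ) ⁻¹' A ∩ frontier (Eell ξ) = gam (Real.tanh ξ) '' (A ∩ Iv) := by
  ext x
  constructor
  · rintro ⟨h1, h2⟩
    exact ⟨_, ⟨h1, ang_mem _ _⟩, gam_ang hξ h2⟩
  · rintro ⟨t, ⟨h1, h2⟩, rfl⟩
    refine ⟨?_, gam_mem hξ t⟩
    rw [Set.mem_preimage, ang_gam (tanh_pos_of_pos hξ) h2]; exact h1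

/-- pulled back Hausdorff measure -/
def mH (ξ : ℝ) : Measure ℝ := Measure.map (ang (Real.tanh ξ)) ((μH[1] : Measure Pt).restrict (frontier (Eell ξ)))

def nH (ξ : ℝ) : Measure ℝ := ((volume : Measure ℝ).restrict Iv).withDensity
  (fun t => ENNReal.ofReal (spd (Real.tanh ξ) t))

lemma mH_apply {ξ : ℝ} (hξ : 0 < ξ) {A : Set ℝ} (hA : MeasurableSet A) :
    mH ξ A = μH[1] (gam (Real.tanh ξ) '' (A ∩ Iv)) := by
  rw [mH, Measure.map_apply (measurable_ang _) hA, Measure.restrict_apply (measurable_ang _ hA),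
    image_eq hξ]

lemma mIv : MeasurableSet Iv := measurableSet_Ioc

lemma nH_apply {ξ : ℝ} {A : Set ℝ} (hA : MeasurableSet A) :
    nH ξ A = ∫⁻ t in A ∩ Iv, ENNReal.ofReal (spd (Real.tanh ξ) t) := by
  rw [nH, withDensity_apply _ hA, Measure.restrict_restrict hA]

lemma mH_local {ξ : ℝ} (hξ : 0 < ξ) (t₀ : ℝ) {δ : ℝ} (hδ : 0 < δ) :
    ∃ U ∈ nhds t₀, ∀ A : Set ℝ, MeasurableSet A → A ⊆ U →
      mH ξ A ≤ (nH ξ + ENNReal.ofReal (2 * δ) • volume.restrict Iv) A ∧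
      nH ξ A ≤ (mH ξ + ENNReal.ofReal (2 * δ) • volume.restrict Iv) A := by
  have hb := tanh_pos_of_pos hξ
  set b := Real.tanh ξ with hbdef
  have hs := spd_pos hb t₀
  -- shrink δ
  obtain ⟨δ', hδ', hle, hlt⟩ : ∃ δ', 0 < δ' ∧ δ' ≤ δ ∧ δ' < spd b t₀ :=
    ⟨min δ (spd b t₀ / 2), by positivity, min_le_left _ _,
      (min_le_right _ _).trans_lt (by linarith)⟩
  obtain ⟨U, hU, h⟩ := gam_local b t₀ hδ'
  refine ⟨U, hU, fun A hA hAU => ?_⟩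
  simp only [Measure.add_apply, Measure.smul_apply, smul_eq_mul, Measure.restrict_apply hA]
  have hAI : A ∩ Iv ⊆ U := Set.inter_subset_left.trans hAU
  have e1 : μH[1] (gam b '' (A ∩ Iv)) ≤ ENNReal.ofReal (spd b t₀ + δ') * volume (A ∩ Iv) := by
    have hl : LipschitzOnWith (Real.toNNReal (spd b t₀ + δ')) (gam b) (A ∩ Iv) := by
      refine LipschitzOnWith.of_dist_le_mul fun x hx y hy => ?_
      rw [dist_eq_norm, Real.dist_eq, Real.coe_toNNReal _ (by positivity)]
      exact (h x (hAI hx) y (hAI hy)).2.1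
    have := hl.hausdorffMeasure_image_le (d := 1) zero_le_one
    rw [ENNReal.rpow_one, hausdorffMeasure_real] at this
    exact this
  have e2 : ENNReal.ofReal (spd b t₀ - δ') * volume (A ∩ Iv) ≤ μH[1] (gam b '' (A ∩ Iv)) := by
    have hpos : 0 < spd b t₀ - δ' := by linarith
    have hl : LipschitzOnWith (Real.toNNReal (spd b t₀ - δ')⁻¹) (ang b) (gam b '' (A ∩ Iv)) := by
      refine LipschitzOnWith.of_dist_le_mul ?_
      rintro _ ⟨x, hx, rfl⟩ _ ⟨y, hy, rfl⟩
      rw [ang_gam hb hx.2, ang_gam hb hy.2, Real.dist_eq, dist_eq_norm,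
        Real.coe_toNNReal _ (by positivity), ← div_eq_inv_mul, le_div_iff₀ hpos, mul_comm]
      exact (h x (hAI hx) y (hAI hy)).1
    have h2 := hl.hausdorffMeasure_image_le (d := 1) zero_le_one
    have h3 : ang b '' (gam b '' (A ∩ Iv)) = A ∩ Iv := by
      rw [Set.image_image]
      ext t; constructor
      · rintro ⟨s, hs, rfl⟩; simp only; rw [ang_gam hb hs.2]; exact hs
      · intro ht; exact ⟨t, ht, ang_gam hb ht.2⟩
    rw [ENNReal.rpow_one, hausdorffMeasure_real, h3] at h2
    calc ENNReal.ofReal (spd b t₀ - δ') * volume (A ∩ Iv) ≤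
        ENNReal.ofReal (spd b t₀ - δ') * (ENNReal.ofReal (spd b t₀ - δ')⁻¹ * μH[1] (gam b '' (A ∩ Iv))) := by
          gcongr; exact h2
      _ = _ := by
          rw [← mul_assoc, ← ENNReal.ofReal_mul hpos.le, mul_inv_cancel₀ hpos.ne']; simp
  have e3 : nH ξ A ≤ ENNReal.ofReal (spd b t₀ + δ') * volume (A ∩ Iv) := by
    rw [nH_apply hA, ← setLIntegral_const]
    refine setLIntegral_mono' (hA.inter mIv) fun t ht => ?_
    exact ENNReal.ofReal_le_ofReal (h t (hAI ht) t (hAI ht)).2.2.1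
  have e4 : ENNReal.ofReal (spd b t₀ - δ') * volume (A ∩ Iv) ≤ nH ξ A := by
    rw [nH_apply hA, ← setLIntegral_const]
    refine setLIntegral_mono' (hA.inter mIv) fun t ht => ?_
    exact ENNReal.ofReal_le_ofReal (h t (hAI ht) t (hAI ht)).2.2.2
  have e5 : ENNReal.ofReal (spd b t₀ + δ') * volume (A ∩ Iv) ≤
      ENNReal.ofReal (spd b t₀ - δ') * volume (A ∩ Iv) + ENNReal.ofReal (2 * δ) * volume (A ∩ Iv) := by
    rw [← add_mul, ← ENNReal.ofReal_add (by linarith) (by linarith)]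
    gcongr ENNReal.ofReal ?_ * _; linarith
  rw [mH_apply hξ hA]
  exact ⟨e1.trans (e5.trans (by gcongr)), e3.trans (e5.trans (by gcongr))⟩

lemma mH_eq_nH {ξ : ℝ} (hξ : 0 < ξ) : mH ξ = nH ξ := by
  have key : ∀ m n : Measure ℝ, (∀ δ : ℝ, 0 < δ → m ≤ n + ENNReal.ofReal (2 * δ) • volume.restrict Iv) →
      m ≤ n := by
    intro m n h
    refine Measure.le_iff.mpr fun A hA => ?_
    refine ENNReal.le_of_forall_pos_le_add fun ε hε _ => ?_
    have hπ := Real.pi_pos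
    have := h (ε / (4 * π)) (by positivity) A
    refine this.trans ?_
    simp only [Measure.add_apply, Measure.smul_apply, smul_eq_mul]
    gcongr
    calc _ ≤ ENNReal.ofReal (2 * (ε / (4 * π))) * (volume.restrict Iv) Set.univ := by
          gcongr; exact Set.subset_univ _
      _ = ENNReal.ofReal ε := by
          rw [Measure.restrict_apply_univ, Iv, Real.volume_Ioc, ← ENNReal.ofReal_mul (by positivity)]
          congr 1; field_simp; ring
      _ = ε := by simp
      _ ≤ _ := le_rfl
  apply le_antisymm
  · refine key _ _ fun δ hδ => measure_le_of_local _ _ fun t => ?_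
    obtain ⟨U, hU, h⟩ := mH_local hξ t hδ
    exact ⟨U, hU, fun A hA hAU => (h A hA hAU).1⟩
  · refine key _ _ fun δ hδ => measure_le_of_local _ _ fun t => ?_
    obtain ⟨U, hU, h⟩ := mH_local hξ t hδ
    exact ⟨U, hU, fun A hA hAU => (h A hA hAU).2⟩

/-- Line integral over the ellipse. -/
lemma integral_ellipse {ξ : ℝ} (hξ : 0 < ξ) (f : Pt → ℝ)
    (hf : AEStronglyMeasurable (fun t => f (gam (Real.tanh ξ) t)) (volume.restrict Iv)) :
    ∫ y in frontier (Eell ξ), f y ∂μH[1] =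
      ∫ t in Iv, spd (Real.tanh ξ) t * f (gam (Real.tanh ξ) t) := by
  set b := Real.tanh ξ with hbdef
  have h1 : ∫ y in frontier (Eell ξ), f y ∂μH[1] =
      ∫ y in frontier (Eell ξ), (fun t => f (gam b t)) (ang b y) ∂μH[1] := by
    refine setIntegral_congr_fun (isClosed_frontier' ξ) fun y hy => ?_
    simp only [hbdef, gam_ang hξ hy]
  have h2 : Measure.map (ang b) ((μH[1] : Measure Pt).restrict (frontier (Eell ξ))) = nH ξ :=
    mH_eq_nH hξ
  have hac : nH ξ ≪ volume.restrict Iv := withDensity_absolutelyContinuous _ _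
  rw [h1, ← integral_map (f := fun t => f (gam b t)) (measurable_ang b).aemeasurable (by rw [h2]; exact hf.mono_ac hac), h2, nH]
  have hm : Measurable fun t => Real.toNNReal (spd b t) :=
    (continuous_spd b).measurable.real_toNNReal
  have := integral_withDensity_eq_integral_smul (μ := volume.restrict Iv) hm
    (fun t => f (gam b t))
  refine Eq.trans this (integral_congr_ae (Filter.Eventually.of_forall fun t => ?_))
  simp only [NNReal.smul_def, smul_eq_mul, Real.coe_toNNReal _ (Real.sqrt_nonneg _), spd]


/-- regularized gradient kernel -/
def ker (ε : ℝ) (z : Pt) : Pt →L[ℝ] ℝ := innerSL ℝ ((‖z‖ ^ 2 + ε ^ 2)⁻¹ • z)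

lemma measurable_ker (ε : ℝ) : Measurable (ker ε) := by
  unfold ker
  have h1 : Measurable fun z : Pt => (‖z‖ ^ 2 + ε ^ 2)⁻¹ := by fun_prop
  exact (innerSL ℝ (E := Pt)).continuous.measurable.comp (h1.smul measurable_id)

lemma norm_ker (ε : ℝ) (z : Pt) : ‖ker ε z‖ = (‖z‖ ^ 2 + ε ^ 2)⁻¹ * ‖z‖ := by
  rw [ker, innerSL_apply_norm, norm_smul, Real.norm_of_nonneg (by positivity)]

lemma norm_ker_le {ε : ℝ} (hε : 0 < ε) (z : Pt) : ‖ker ε z‖ ≤ ε⁻¹ := by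
  rw [norm_ker, inv_mul_le_iff₀ (by positivity), ← div_eq_mul_inv, le_div_iff₀ hε]
  nlinarith [sq_nonneg (‖z‖ - ε), norm_nonneg z, sq_nonneg (‖z‖ + ε)]

/-- profile of the difference of kernels -/
def prof (ε r : ℝ) : ℝ := r⁻¹ * (1 + (r / ε) ^ 2)⁻¹

lemma norm_ker_sub {ε : ℝ} (hε : 0 < ε) (z : Pt) : ‖ker ε z - ker 0 z‖ = prof ε ‖z‖ := by
  by_cases hz : z = 0
  · subst hz; simp [ker, prof]
  have hz' : 0 < ‖z‖ := norm_pos_iff.mpr hz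
  rw [ker, ker, ← map_sub, innerSL_apply_norm, ← sub_smul, norm_smul, Real.norm_eq_abs, abs_sub_comm,
    abs_of_nonneg]
  · unfold prof; field_simp; ring
  · rw [sub_nonneg]
    gcongr

lemma finrank_Pt : Module.finrank ℝ Pt = 2 := by simp

lemma prof_aux {ε : ℝ} (hε : 0 < ε) : Set.EqOn (fun y : ℝ => y ^ (Module.finrank ℝ Pt - 1) • prof ε y)
    (fun y => (fun u : ℝ => (1 + u ^ 2)⁻¹) (y / ε)) (Set.Ioi 0) := by
  intro y hy
  have hy : 0 < y := hy
  simp only [finrank_Pt, prof, smul_eq_mul]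
  norm_num
  field_simp

lemma integrable_prof {ε : ℝ} (hε : 0 < ε) : Integrable (fun z : Pt => prof ε ‖z‖) := by
  rw [integrable_fun_norm_addHaar (volume : Measure Pt) (f := prof ε)]
  rw [integrableOn_congr_fun (prof_aux hε) measurableSet_Ioi]
  exact (integrable_inv_one_add_sq.comp_div hε.ne').integrableOn

lemma integral_prof : ∃ C : ℝ, 0 ≤ C ∧ ∀ ε : ℝ, 0 < ε → ∫ z : Pt, prof ε ‖z‖ = C * ε := by
  refine ⟨Module.finrank ℝ Pt • (volume : Measure Pt).real (Metric.ball 0 1) •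
    ∫ u in Set.Ioi (0 : ℝ), (1 + u ^ 2)⁻¹, ?_, fun ε hε => ?_⟩
  · have : 0 ≤ ∫ u in Set.Ioi (0 : ℝ), (1 + u ^ 2)⁻¹ := integral_nonneg fun u => by positivity
    positivity
  · rw [integral_fun_norm_addHaar (volume : Measure Pt) (prof ε),
      setIntegral_congr_fun measurableSet_Ioi (prof_aux hε)]
    have := integral_comp_mul_right_Ioi (fun u : ℝ => (1 + u ^ 2)⁻¹) 0 (inv_pos.mpr hε)
    simp only [div_eq_mul_inv]
    rw [this]
    simp only [nsmul_eq_mul, smul_eq_mul, zero_mul, inv_inv]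
    ring

lemma finE {E : Set Pt} (hE : Bornology.IsBounded E) (hEm : MeasurableSet E) : IsFiniteMeasure ((volume : Measure Pt).restrict E) :=
  ⟨by rw [Measure.restrict_apply_univ]; exact hE.measure_lt_top⟩

lemma int_ker {E : Set Pt} (hE : Bornology.IsBounded E) (hEm : MeasurableSet E) {ε : ℝ} (hε : 0 < ε) (x : Pt) : IntegrableOn (fun y => ker ε (x - y)) E := by
  have := finE hE hEm
  refine Integrable.of_bound (C := ε⁻¹) ?_ (Filter.Eventually.of_forall fun y => norm_ker_le hε _)
  exact ((measurable_ker ε).comp (by fun_prop)).aestronglyMeasurable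

lemma int_prof {E : Set Pt} (hE : Bornology.IsBounded E) (hEm : MeasurableSet E) {ε : ℝ} (hε : 0 < ε) (x : Pt) : Integrable (fun y : Pt => prof ε ‖x - y‖) :=
  (integrable_prof hε).comp_sub_left x

lemma int_ker_sub {E : Set Pt} (hE : Bornology.IsBounded E) (hEm : MeasurableSet E) {ε : ℝ} (hε : 0 < ε) (x : Pt) :
    IntegrableOn (fun y => ker ε (x - y) - ker 0 (x - y)) E := by
  refine Integrable.mono' (int_prof hE hEm hε x).integrableOn ?_
    (Filter.Eventually.of_forall fun y => (norm_ker_sub hε _).le)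
  exact (((measurable_ker ε).comp (by fun_prop)).sub
    ((measurable_ker 0).comp (by fun_prop))).aestronglyMeasurable

lemma int_ker0 {E : Set Pt} (hE : Bornology.IsBounded E) (hEm : MeasurableSet E) (x : Pt) : IntegrableOn (fun y => ker 0 (x - y)) E := by
  have := (int_ker hE hEm one_pos x).sub (int_ker_sub hE hEm one_pos x)
  refine this.congr (Filter.Eventually.of_forall fun y => ?_)
  simp

lemma int_norm {E : Set Pt} (hE : Bornology.IsBounded E) (hEm : MeasurableSet E) (x : Pt) : IntegrableOn (fun y => ‖x - y‖) E := by
  obtain ⟨R, hR⟩ := hE.exists_norm_le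
  have := finE hE hEm
  refine Integrable.of_bound (C := ‖x‖ + R) (by fun_prop) ?_
  refine (ae_restrict_iff' hEm).mpr (Filter.Eventually.of_forall fun y hy => ?_)
  rw [norm_norm]
  exact (norm_sub_le _ _).trans (by gcongr; exact hR y hy)

lemma int_sq {E : Set Pt} (hE : Bornology.IsBounded E) (hEm : MeasurableSet E) (x : Pt) (ε : ℝ) : IntegrableOn (fun y => ‖x - y‖ ^ 2 + ε ^ 2) E := by
  obtain ⟨R, hR⟩ := hE.exists_norm_le
  have := finE hE hEm
  refine Integrable.of_bound (C := (‖x‖ + R) ^ 2 + ε ^ 2) (by fun_prop) ?_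
  refine (ae_restrict_iff' hEm).mpr (Filter.Eventually.of_forall fun y hy => ?_)
  rw [Real.norm_of_nonneg (by positivity)]
  gcongr
  exact (norm_sub_le _ _).trans (by gcongr; exact hR y hy)

lemma int_log {E : Set Pt} (hE : Bornology.IsBounded E) (hEm : MeasurableSet E) (x : Pt) : IntegrableOn (fun y => Real.log ‖x - y‖) E := by
  refine Integrable.mono' ((int_norm hE hEm x).add (int_ker0 hE hEm x).norm) ?_ ?_
  · exact (by fun_prop : Measurable fun y => Real.log ‖x - y‖).aestronglyMeasurable
  · refine Filter.Eventually.of_forall fun y => ?_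
    simp only [Pi.add_apply, norm_ker]
    rcases (norm_nonneg (x - y)).eq_or_lt with h | h
    · rw [← h]; simp
    · set r := ‖x - y‖
      have h1 := Real.log_le_self h.le
      have h2 := Real.log_le_self (inv_pos.mpr h).le
      rw [Real.log_inv] at h2
      have h3 : (r ^ 2 + 0 ^ 2)⁻¹ * r = r⁻¹ := by field_simp; ring
      have h4 := inv_pos.mpr h
      rw [h3, Real.norm_eq_abs, abs_le]
      constructor <;> linarith

lemma reg_bound {E : Set Pt} (hE : Bornology.IsBounded E) (hEm : MeasurableSet E) {ε : ℝ} (hε1 : ε ≤ 1) (hε : 0 < ε) (z : Pt) (hz : 0 < ‖z‖) :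
    ‖(1 / 2) * Real.log (‖z‖ ^ 2 + ε ^ 2)‖ ≤ |Real.log ‖z‖| + (‖z‖ ^ 2 + 1 ^ 2) := by
  have h0 : Real.log ‖z‖ = (1 / 2) * Real.log (‖z‖ ^ 2) := by rw [Real.log_pow]; push_cast; ring
  have h1 : Real.log (‖z‖ ^ 2) ≤ Real.log (‖z‖ ^ 2 + ε ^ 2) :=
    Real.log_le_log (by positivity) (by linarith [sq_nonneg ε])
  have h2 : Real.log (‖z‖ ^ 2 + ε ^ 2) ≤ ‖z‖ ^ 2 + ε ^ 2 := Real.log_le_self (by positivity)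
  have h3 : ε ^ 2 ≤ 1 := by nlinarith
  have h4 := neg_abs_le (Real.log ‖z‖)
  have h5 := abs_nonneg (Real.log ‖z‖)
  rw [Real.norm_eq_abs, abs_le]
  constructor <;> nlinarith [sq_nonneg ‖z‖]

lemma hasFDerivAt_reg {E : Set Pt} (hE : Bornology.IsBounded E) (hEm : MeasurableSet E) {ε : ℝ} (hε : 0 < ε) (x : Pt) :
    HasFDerivAt (fun x => ∫ y in E, (1 / 2) * Real.log (‖x - y‖ ^ 2 + ε ^ 2))
      (∫ y in E, ker ε (x - y)) x := by
  have := finE hE hEm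
  refine hasFDerivAt_integral_of_dominated_of_fderiv_le (F' := fun x y => ker ε (x - y))
    (bound := fun _ => ε⁻¹) (s := Set.univ) Filter.univ_mem ?_ ?_ ?_ ?_ ?_ ?_
  · refine Filter.Eventually.of_forall fun x => ?_
    exact (by fun_prop : Measurable fun y => (1 / 2) * Real.log (‖x - y‖ ^ 2 + ε ^ 2)).aestronglyMeasurable
  · refine Integrable.mono' ((int_sq hE hEm x ε).add (integrable_const |Real.log (ε ^ 2)|)) ?_ ?_
    · exact (by fun_prop : Measurable fun y => (1 / 2) * Real.log (‖x - y‖ ^ 2 + ε ^ 2)).aestronglyMeasurable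
    · refine Filter.Eventually.of_forall fun y => ?_
      have h1 : Real.log (ε ^ 2) ≤ Real.log (‖x - y‖ ^ 2 + ε ^ 2) :=
        Real.log_le_log (by positivity) (by linarith [sq_nonneg ‖x - y‖])
      have h2 : Real.log (‖x - y‖ ^ 2 + ε ^ 2) ≤ ‖x - y‖ ^ 2 + ε ^ 2 := Real.log_le_self (by positivity)
      have h4 := neg_abs_le (Real.log (ε ^ 2))
      have h5 := abs_nonneg (Real.log (ε ^ 2))
      simp only [Pi.add_apply]
      rw [Real.norm_eq_abs, abs_le]
      constructor <;> nlinarith [sq_nonneg ‖x - y‖, sq_nonneg ε]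
  · exact ((measurable_ker ε).comp (by fun_prop)).aestronglyMeasurable
  · exact Filter.Eventually.of_forall fun y x _ => norm_ker_le hε _
  · exact integrable_const _
  · refine Filter.Eventually.of_forall fun y x _ => ?_
    have h1 : HasFDerivAt (fun x : Pt => ‖x - y‖ ^ 2) (2 • (innerSL ℝ (x - y)).comp (ContinuousLinearMap.id ℝ Pt)) x :=
      ((hasFDerivAt_id x).sub_const y).norm_sq
    have h2 := (((h1.add_const (ε ^ 2)).log (by positivity)).const_mul (1 / 2 : ℝ))
    refine h2.congr_fderiv ?_
    ext v
    simp [ker, real_inner_smul_left]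
    ring

lemma hasFDerivAt_pot {E : Set Pt} (hE : Bornology.IsBounded E) (hEm : MeasurableSet E) (x : Pt) :
    HasFDerivAt (fun x => ∫ y in E, Real.log ‖x - y‖) (∫ y in E, ker 0 (x - y)) x := by
  obtain ⟨C, hC, hprof⟩ := integral_prof
  have hpos : ∀ n : ℕ, (0 : ℝ) < 1 / ((n : ℝ) + 1) := fun n => by positivity
  refine hasFDerivAt_of_tendstoUniformly (l := Filter.atTop)
    (f := fun (n : ℕ) x => ∫ y in E, (1 / 2) * Real.log (‖x - y‖ ^ 2 + (1 / ((n : ℝ) + 1)) ^ 2))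
    (f' := fun (n : ℕ) x => ∫ y in E, ker (1 / ((n : ℝ) + 1)) (x - y))
    (g' := fun x => ∫ y in E, ker 0 (x - y)) ?_ ?_ ?_ x
  · rw [Metric.tendstoUniformly_iff]
    intro e he
    have ht : Filter.Tendsto (fun n : ℕ => C * (1 / ((n : ℝ) + 1))) Filter.atTop (nhds (C * 0)) :=
      tendsto_one_div_add_atTop_nhds_zero_nat.const_mul C
    rw [mul_zero] at ht
    filter_upwards [ht.eventually_lt_const he] with n hn x
    refine lt_of_le_of_lt ?_ hn
    rw [dist_comm, dist_eq_norm, ← integral_sub (int_ker hE hEm (hpos n) x) (int_ker0 hE hEm x)]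
    refine (norm_integral_le_integral_norm _).trans ?_
    rw [← hprof _ (hpos n), ← integral_sub_left_eq_self (fun z => prof (1 / ((n : ℝ) + 1)) ‖z‖) volume x]
    simp only [norm_ker_sub (hpos n)]
    refine setIntegral_le_integral (int_prof hE hEm (hpos n) x) (Filter.Eventually.of_forall fun y => ?_)
    simp only [prof, Pi.zero_apply]; positivity
  · intro n x
    exact hasFDerivAt_reg hE hEm (hpos n) x
  · intro x
    refine tendsto_integral_of_dominated_convergence
      (fun y => |Real.log ‖x - y‖| + (‖x - y‖ ^ 2 + 1 ^ 2)) ?_ ?_ ?_ ?_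
    · intro n
      exact (by fun_prop : Measurable fun y => (1 / 2) * Real.log (‖x - y‖ ^ 2 + (1 / ((n : ℝ) + 1)) ^ 2)).aestronglyMeasurable
    · exact (int_log hE hEm x).abs.add (int_sq hE hEm x 1)
    · intro n
      have : ∀ᵐ y ∂(volume.restrict E), y ≠ x := by
        refine ae_restrict_of_ae ?_
        exact Measure.ae_ne volume x
      filter_upwards [this] with y hy
      refine reg_bound hE hEm ?_ (hpos n) _ (norm_pos_iff.mpr (sub_ne_zero.mpr hy.symm))
      rw [div_le_one (by positivity)]; linarith [n.cast_nonneg (α := ℝ)]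
    · have : ∀ᵐ y ∂(volume.restrict E), y ≠ x := by
        refine ae_restrict_of_ae ?_
        exact Measure.ae_ne volume x
      filter_upwards [this] with y hy
      have hz : 0 < ‖x - y‖ := (norm_pos_iff.mpr (sub_ne_zero.mpr hy.symm))
      have h1 : Filter.Tendsto (fun n : ℕ => ‖x - y‖ ^ 2 + (1 / ((n : ℝ) + 1)) ^ 2) Filter.atTop
          (nhds (‖x - y‖ ^ 2 + 0 ^ 2)) :=
        (tendsto_one_div_add_atTop_nhds_zero_nat.pow 2).const_add _
      have h2 := (h1.log (by positivity)).const_mul (1 / 2)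
      have h0 : Real.log ‖x - y‖ = (1 / 2) * Real.log (‖x - y‖ ^ 2 + 0 ^ 2) := by
        rw [zero_pow two_ne_zero, add_zero, Real.log_pow]; push_cast; ring
      rw [h0]; exact h2




lemma integral_polar (f : Pt → ℝ) : ∫ z, f z =
    ∫ p in Set.Ioi (0 : ℝ) ×ˢ Set.Ioo (-π) π, p.1 * f (pt (p.1 * Real.cos p.2) (p.1 * Real.sin p.2)) := by
  have h1 := (PiLp.volume_preserving_toLp (Fin 2)).integral_comp
    (MeasurableEquiv.toLp 2 (Fin 2 → ℝ)).measurableEmbedding f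
  have h2 := (volume_preserving_finTwoArrow ℝ).symm.integral_comp
    (MeasurableEquiv.finTwoArrow (α := ℝ)).symm.measurableEmbedding
    (fun v => f (WithLp.toLp 2 v))
  rw [← h1, ← h2, ← integral_comp_polarCoord_symm]
  rfl

section angint
variable {b : ℝ}

lemma den_pos (hb : 0 < b) (a : ℝ) : 0 < b ^ 2 * Real.cos a ^ 2 + Real.sin a ^ 2 := by
  by_cases h : Real.sin a = 0
  · have : Real.cos a ^ 2 = 1 := by have := Real.sin_sq_add_cos_sq a; rw [h] at this; linarith
    rw [this]; positivity
  · positivity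

lemma den_pos' (hb : 0 < b) (a : ℝ) : 0 < b * Real.cos a ^ 2 + Real.sin a ^ 2 := by
  by_cases h : Real.sin a = 0
  · have : Real.cos a ^ 2 = 1 := by have := Real.sin_sq_add_cos_sq a; rw [h] at this; linarith
    rw [this]; positivity
  · positivity

lemma int_inv_den (hb : 0 < b) :
    ∫ a in (-π)..π, (b ^ 2 * Real.cos a ^ 2 + Real.sin a ^ 2)⁻¹ = 2 * π / b := by
  have hd : ∀ a ∈ Set.uIcc (-π) π, HasDerivAt (fun a => (a + Real.arctan ((1 - b) * Real.sin a * Real.cos a /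
      (b * Real.cos a ^ 2 + Real.sin a ^ 2))) / b) (b ^ 2 * Real.cos a ^ 2 + Real.sin a ^ 2)⁻¹ a := by
    intro a _
    have hN := den_pos' hb a
    have hD := den_pos hb a
    have hs := Real.hasDerivAt_sin a
    have hc := Real.hasDerivAt_cos a
    have h1 := ((hs.const_mul (1 - b)).mul hc).div (((hc.pow 2).const_mul b).add (hs.pow 2)) hN.ne'
    have h2 := (((hasDerivAt_id a).add h1.arctan).div_const b)
    refine h2.congr_deriv ?_
    simp only [Pi.add_apply, Pi.mul_apply, Pi.pow_apply, Pi.div_apply]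
    have hsc := Real.sin_sq_add_cos_sq a
    set s := Real.sin a
    set c := Real.cos a
    have key : 1 + ((1 - b) * s * c / (b * c ^ 2 + s ^ 2)) ^ 2 = (b ^ 2 * c ^ 2 + s ^ 2) / (b * c ^ 2 + s ^ 2) ^ 2 := by
      rw [div_pow, eq_div_iff (by positivity), add_mul, div_mul_cancel₀ _ (by positivity)]
      have : b ^ 2 * c ^ 2 + s ^ 2 = (b ^ 2 * c ^ 2 + s ^ 2) * (s ^ 2 + c ^ 2) := by rw [hsc, mul_one]
      rw [this]; ring
    rw [key]
    field_simp
    have e : s ^ 2 = 1 - c ^ 2 := by linarith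
    have e3 : s ^ 3 = s * (1 - c ^ 2) := by rw [← e]; ring
    have e4 : s ^ 4 = (1 - c ^ 2) ^ 2 := by rw [← e]; ring
    push_cast
    ring_nf
    simp only [e, e3, e4]
    ring
  rw [intervalIntegral.integral_eq_sub_of_hasDerivAt hd]
  · simp; ring
  · apply Continuous.intervalIntegrable
    exact Continuous.inv₀ (by fun_prop) fun a => (den_pos hb a).ne'

lemma cont_quot (hb : 0 < b) {f : ℝ → ℝ} (hf : Continuous f) :
    Continuous fun a => f a / (b ^ 2 * Real.cos a ^ 2 + Real.sin a ^ 2) :=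
  hf.div (by fun_prop) fun a => (den_pos hb a).ne'

lemma int_cc (hb : 0 < b) (hb1 : b < 1) :
    ∫ a in (-π)..π, Real.cos a ^ 2 / (b ^ 2 * Real.cos a ^ 2 + Real.sin a ^ 2) = 2 * π / (b * (1 + b)) := by
  have h1 : ∫ a in (-π)..π, ((1 - b ^ 2) * (Real.cos a ^ 2 / (b ^ 2 * Real.cos a ^ 2 + Real.sin a ^ 2)) + 1)
      = ∫ a in (-π)..π, (b ^ 2 * Real.cos a ^ 2 + Real.sin a ^ 2)⁻¹ := by
    refine intervalIntegral.integral_congr fun a _ => ?_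
    have hD := den_pos hb a
    field_simp
    linarith [Real.sin_sq_add_cos_sq a]
  rw [int_inv_den hb, intervalIntegral.integral_add
    ((cont_quot hb (by fun_prop)).const_mul _ |>.intervalIntegrable _ _) (by simp),
    intervalIntegral.integral_const_mul] at h1
  simp only [intervalIntegral.integral_const, smul_eq_mul, mul_one] at h1
  have h3 : (1 - b ^ 2) ≠ 0 := by nlinarith
  apply mul_left_cancel₀ h3
  rw [eq_sub_of_add_eq h1]
  field_simp
  ring

lemma int_ss (hb : 0 < b) (hb1 : b < 1) :
    ∫ a in (-π)..π, Real.sin a ^ 2 / (b ^ 2 * Real.cos a ^ 2 + Real.sin a ^ 2) = 2 * π / (1 + b) := by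
  have h1 : ∫ a in (-π)..π, Real.sin a ^ 2 / (b ^ 2 * Real.cos a ^ 2 + Real.sin a ^ 2)
      = ∫ a in (-π)..π, (1 - b ^ 2 * (Real.cos a ^ 2 / (b ^ 2 * Real.cos a ^ 2 + Real.sin a ^ 2))) := by
    refine intervalIntegral.integral_congr fun a _ => ?_
    have hD := den_pos hb a
    field_simp
    ring
  rw [h1, intervalIntegral.integral_sub (by simp)
    ((cont_quot hb (by fun_prop)).const_mul _ |>.intervalIntegrable _ _),
    intervalIntegral.integral_const_mul, int_cc hb hb1]
  simp only [intervalIntegral.integral_const, smul_eq_mul, mul_one]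
  field_simp
  ring

lemma int_odd {f : ℝ → ℝ} (hf : ∀ a, f (-a) = - f a) (R : ℝ) : ∫ a in (-R)..R, f a = 0 := by
  have h := intervalIntegral.integral_comp_neg (a := -R) (b := R) f
  simp only [hf, intervalIntegral.integral_neg, neg_neg] at h
  linarith

lemma int_antiper {f : ℝ → ℝ} (hf : ∀ a, f (a + π) = - f a) : ∫ a in (-π)..π, f a = 0 := by
  have hp : Function.Periodic f (2 * π) := fun a => by
    rw [two_mul, ← add_assoc, hf, hf, neg_neg]
  have h1 := hp.intervalIntegral_add_eq (-π) 0
  have h2 := intervalIntegral.integral_comp_add_right (a := -π) (b := π) f π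
  simp only [hf, intervalIntegral.integral_neg] at h2
  have e1 : -π + 2 * π = π := by ring
  have e2 : π + π = 0 + 2 * π := by ring
  rw [e1] at h1
  rw [e2, neg_add_cancel] at h2
  linarith

lemma int_total (hb : 0 < b) (hb1 : b < 1) (v1 v2 x1 x2 : ℝ) :
    ∫ a in (-π)..π, (v1 * Real.cos a + v2 * Real.sin a) * (b ^ 2 * x1 * Real.cos a + x2 * Real.sin a) /
      (b ^ 2 * Real.cos a ^ 2 + Real.sin a ^ 2) = 2 * π / (1 + b) * (b * x1 * v1 + x2 * v2) := by
  have h1 : ∀ a, (v1 * Real.cos a + v2 * Real.sin a) * (b ^ 2 * x1 * Real.cos a + x2 * Real.sin a) /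
      (b ^ 2 * Real.cos a ^ 2 + Real.sin a ^ 2) =
      (v1 * x1 * b ^ 2) * (Real.cos a ^ 2 / (b ^ 2 * Real.cos a ^ 2 + Real.sin a ^ 2)) +
      (v2 * x2) * (Real.sin a ^ 2 / (b ^ 2 * Real.cos a ^ 2 + Real.sin a ^ 2)) +
      (v1 * x2 + v2 * x1 * b ^ 2) * (Real.cos a * Real.sin a / (b ^ 2 * Real.cos a ^ 2 + Real.sin a ^ 2)) := by
    intro a; ring
  simp only [h1]
  rw [intervalIntegral.integral_add, intervalIntegral.integral_add, intervalIntegral.integral_const_mul,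
    intervalIntegral.integral_const_mul, intervalIntegral.integral_const_mul, int_cc hb hb1, int_ss hb hb1,
    int_odd (f := fun a => Real.cos a * Real.sin a / (b ^ 2 * Real.cos a ^ 2 + Real.sin a ^ 2))
      (by intro a; simp [neg_div])]
  · field_simp
    ring
  · exact ((cont_quot hb (by fun_prop)).const_mul _ |>.intervalIntegrable _ _)
  · exact ((cont_quot hb (by fun_prop)).const_mul _ |>.intervalIntegrable _ _)
  · exact ((cont_quot hb (by fun_prop)).const_mul _ |>.add ((cont_quot hb (by fun_prop)).const_mul _)
      |>.intervalIntegrable _ _)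
  · exact ((cont_quot hb (by fun_prop)).const_mul _ |>.intervalIntegrable _ _)

/-- exit distance -/
def exd (b x1 x2 a : ℝ) : ℝ := -2 * (b ^ 2 * x1 * Real.cos a + x2 * Real.sin a) / (b ^ 2 * Real.cos a ^ 2 + Real.sin a ^ 2)

lemma exd_iff (hb : 0 < b) {x1 x2 : ℝ} (hx : x1 ^ 2 + (x2 / b) ^ 2 = 1) (a : ℝ) {r : ℝ} (hr : 0 < r) :
    (x1 + r * Real.cos a) ^ 2 + ((x2 + r * Real.sin a) / b) ^ 2 < 1 ↔ r < exd b x1 x2 a := by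
  have hD := den_pos hb a
  rw [exd, lt_div_iff₀ hD]
  have e : (x1 + r * Real.cos a) ^ 2 + ((x2 + r * Real.sin a) / b) ^ 2 - (x1 ^ 2 + (x2 / b) ^ 2) =
     r / b ^ 2 * (r * (b ^ 2 * Real.cos a ^ 2 + Real.sin a ^ 2) + 2 * (b ^ 2 * x1 * Real.cos a + x2 * Real.sin a)) := by
    field_simp; ring
  have hp : 0 < r / b ^ 2 := by positivity
  rw [hx] at e
  rw [← sub_neg, e]
  constructor
  · intro h
    have := (pos_iff_neg_of_mul_neg h).mp hp
    linarith
  · intro h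
    exact mul_neg_of_pos_of_neg hp (by linarith)

lemma int_max (hb : 0 < b) (hb1 : b < 1) (v1 v2 x1 x2 : ℝ) :
    ∫ a in (-π)..π, (v1 * Real.cos a + v2 * Real.sin a) * max 0 (exd b x1 x2 a) =
      - (2 * π / (1 + b) * (b * x1 * v1 + x2 * v2)) := by
  have hc : Continuous (exd b x1 x2) := cont_quot hb (by fun_prop)
  have h1 : ∀ a, (v1 * Real.cos a + v2 * Real.sin a) * max 0 (exd b x1 x2 a) =
     (-1) * ((v1 * Real.cos a + v2 * Real.sin a) * (b ^ 2 * x1 * Real.cos a + x2 * Real.sin a) /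
      (b ^ 2 * Real.cos a ^ 2 + Real.sin a ^ 2)) +
     (v1 * Real.cos a + v2 * Real.sin a) * |exd b x1 x2 a| / 2 := by
    intro a
    have : max 0 (exd b x1 x2 a) = (exd b x1 x2 a + |exd b x1 x2 a|) / 2 := by
      rcases le_total 0 (exd b x1 x2 a) with h | h
      · rw [max_eq_right h, abs_of_nonneg h]; ring
      · rw [max_eq_left h, abs_of_nonpos h]; ring
    rw [this]
    have e : exd b x1 x2 a = -2 * ((b ^ 2 * x1 * Real.cos a + x2 * Real.sin a) / (b ^ 2 * Real.cos a ^ 2 + Real.sin a ^ 2)) := by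
      unfold exd; ring
    generalize |exd b x1 x2 a| = q
    rw [e]; ring
  simp only [h1]
  rw [intervalIntegral.integral_add, intervalIntegral.integral_const_mul, int_total hb hb1,
    int_antiper (f := fun a => (v1 * Real.cos a + v2 * Real.sin a) * |exd b x1 x2 a| / 2)]
  · ring
  · intro a
    have : exd b x1 x2 (a + π) = - exd b x1 x2 a := by
      unfold exd; simp only [Real.cos_add_pi, Real.sin_add_pi, neg_sq]; ring
    rw [this, abs_neg, Real.cos_add_pi, Real.sin_add_pi]; ring
  · exact ((cont_quot hb (by fun_prop)).const_mul _ |>.intervalIntegrable _ _)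
  · exact Continuous.intervalIntegrable (by fun_prop) _ _

end angint

lemma Eell_bdd {ξ : ℝ} (hξ : 0 < ξ) : Bornology.IsBounded (Eell ξ) := by
  have hb := tanh_pos_of_pos hξ
  have hb1 := tanh_lt_one' ξ
  refine (Metric.isBounded_ball (x := (0 : Pt)) (r := 1)).subset fun x hx => ?_
  rw [mem_ball_zero_iff, ← pt_eta x, norm_pt, Real.sqrt_lt' one_pos]
  have hx : (x 0) ^ 2 + (x 1 / Real.tanh ξ) ^ 2 < 1 := hx
  have h1 : x 1 ^ 2 ≤ (x 1 / Real.tanh ξ) ^ 2 := by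
    rw [div_pow, le_div_iff₀ (by positivity)]
    have : Real.tanh ξ ^ 2 ≤ 1 := by nlinarith
    nlinarith [sq_nonneg (x 1)]
  simp only [one_pow]; linarith

lemma Eell_meas (ξ : ℝ) : MeasurableSet (Eell ξ) := by
  have hc : Continuous fun x : Pt => (x 0) ^ 2 + (x 1 / Real.tanh ξ) ^ 2 := by fun_prop
  exact (isOpen_lt hc continuous_const).measurableSet

lemma inner_pt (a b : ℝ) (v : Pt) : inner ℝ (pt a b) v = a * v 0 + b * v 1 := by
  rw [PiLp.inner_apply]; simp [Fin.sum_univ_two, mul_comm]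

lemma pt_add (a b c d : ℝ) : pt a b + pt c d = pt (a + c) (b + d) := by
  ext i; fin_cases i <;> rfl

lemma neg_pt (a b : ℝ) : -pt a b = pt (-a) (-b) := by
  ext i; fin_cases i <;> rfl

lemma smul_pt (r a b : ℝ) : r • pt a b = pt (r * a) (r * b) := by
  ext i; fin_cases i <;> rfl

lemma ker_polar {r : ℝ} (hr : 0 < r) (a : ℝ) (x v : Pt) :
    r * ker 0 (x - (x + pt (r * Real.cos a) (r * Real.sin a))) v =
      -(v 0 * Real.cos a + v 1 * Real.sin a) := by
  have h1 : ‖pt (-(r * Real.cos a)) (-(r * Real.sin a))‖ ^ 2 = r ^ 2 := by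
    rw [norm_pt, Real.sq_sqrt (by positivity)]
    linear_combination r ^ 2 * Real.sin_sq_add_cos_sq a
  rw [ker, sub_add_cancel_left, neg_pt, h1, smul_pt, innerSL_apply_apply, inner_pt]
  field_simp
  ring

lemma integral_ker_ellipse {ξ : ℝ} (hξ : 0 < ξ) {x1 x2 : ℝ}
    (hx : x1 ^ 2 + (x2 / Real.tanh ξ) ^ 2 = 1) (v : Pt) :
    (∫ y in Eell ξ, ker 0 (pt x1 x2 - y)) v =
      2 * π / (1 + Real.tanh ξ) * (Real.tanh ξ * x1 * v 0 + x2 * v 1) := by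
  have hb := tanh_pos_of_pos hξ
  have hb1 := tanh_lt_one' ξ
  set b := Real.tanh ξ with hbdef
  have hc : Continuous (exd b x1 x2) := cont_quot hb (by fun_prop)
  rw [ContinuousLinearMap.integral_apply (int_ker0 (Eell_bdd hξ) (Eell_meas ξ) _),
    ← integral_indicator (Eell_meas ξ), ← integral_add_left_eq_self _ (pt x1 x2), integral_polar]
  have hmT : MeasurableSet (Set.Ioi (0 : ℝ) ×ˢ Set.Ioo (-π) π) := measurableSet_Ioi.prod measurableSet_Ioo
  set S : Set (ℝ × ℝ) := {p | p.1 < exd b x1 x2 p.2} with hS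
  have hSm : MeasurableSet S := (isOpen_lt continuous_fst (hc.comp continuous_snd)).measurableSet
  set h : ℝ × ℝ → ℝ := fun p => -(v 0 * Real.cos p.2 + v 1 * Real.sin p.2) with hh
  have hhc : Continuous h := by rw [hh]; fun_prop
  have e1 : Set.EqOn (fun p : ℝ × ℝ => p.1 * (Eell ξ).indicator (fun y => ker 0 (pt x1 x2 - y) v)
      (pt x1 x2 + pt (p.1 * Real.cos p.2) (p.1 * Real.sin p.2))) (S.indicator h)
      (Set.Ioi (0 : ℝ) ×ˢ Set.Ioo (-π) π) := by
    rintro ⟨r, a⟩ ⟨hr, -⟩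
    have hr : 0 < r := hr
    have hiff : (pt x1 x2 + pt (r * Real.cos a) (r * Real.sin a)) ∈ Eell ξ ↔ (r, a) ∈ S := by
      rw [pt_add]
      exact exd_iff hb hx a hr
    by_cases hm : (r, a) ∈ S
    · simp only [Set.indicator_of_mem hm, Set.indicator_of_mem (hiff.mpr hm)]
      exact ker_polar hr a _ v
    · simp only [Set.indicator_of_notMem hm, Set.indicator_of_notMem (mt hiff.mp hm), mul_zero]
  rw [setIntegral_congr_fun hmT e1]
  obtain ⟨M, hM⟩ := (isCompact_Icc (a := -π) (b := π)).exists_bound_of_continuousOn hc.continuousOn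
  have hint : IntegrableOn (S.indicator h) (Set.Ioi (0 : ℝ) ×ˢ Set.Ioo (-π) π) := by
    rw [IntegrableOn, integrable_indicator_iff hSm, IntegrableOn, Measure.restrict_restrict hSm]
    refine IntegrableOn.mono_set (t := Set.Icc 0 M ×ˢ Set.Icc (-π) π)
      (hhc.continuousOn.integrableOn_compact (isCompact_Icc.prod isCompact_Icc)) ?_
    rintro ⟨r, a⟩ ⟨h1, h2, h3⟩
    have h1 : r < exd b x1 x2 a := h1
    have h2 : 0 < r := h2
    have h3 := Set.Ioo_subset_Icc_self h3
    exact ⟨⟨h2.le, h1.le.trans ((le_abs_self _).trans (hM a h3))⟩, h3⟩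
  rw [IntegrableOn, Measure.volume_eq_prod, ← Measure.prod_restrict] at hint
  rw [Measure.volume_eq_prod, ← Measure.prod_restrict, integral_prod_symm _ hint]
  have e2 : ∀ a, ∫ r in Set.Ioi (0 : ℝ), S.indicator h (r, a) =
      -((v 0 * Real.cos a + v 1 * Real.sin a) * max 0 (exd b x1 x2 a)) := by
    intro a
    have : ∀ r, S.indicator h (r, a) = (Set.Iio (exd b x1 x2 a)).indicator
        (fun _ => -(v 0 * Real.cos a + v 1 * Real.sin a)) r := fun r => rfl
    simp only [this]
    rw [integral_indicator measurableSet_Iio, Measure.restrict_restrict measurableSet_Iio,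
      setIntegral_const, Set.inter_comm, Set.Ioi_inter_Iio, Measure.real, Real.volume_Ioo, ENNReal.toReal_ofReal',
      smul_eq_mul, sub_zero, max_comm]
    ring
  simp only [e2]
  rw [← integral_Ioc_eq_integral_Ioo, ← intervalIntegral.integral_of_le (by linarith [Real.pi_pos]),
    intervalIntegral.integral_neg, int_max hb hb1]
  ring

lemma gradient_Ψ {ξ : ℝ} (hξ : 0 < ξ) {x1 x2 : ℝ}
    (hx : x1 ^ 2 + (x2 / Real.tanh ξ) ^ 2 = 1) :
    gradient (Ψell ξ) (pt x1 x2) =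
      ((1 + Real.tanh ξ) ^ 2)⁻¹ • pt (Real.tanh ξ ^ 2 * x1) x2 := by
  have hb := tanh_pos_of_pos hξ
  have h1 := (hasFDerivAt_pot (Eell_bdd hξ) (Eell_meas ξ) (pt x1 x2)).const_mul (1 / (2 * π))
  have h2 : HasFDerivAt (fun x : Pt => Ωell ξ * ‖x‖ ^ 2 / 2) (Ωell ξ • innerSL ℝ (pt x1 x2)) (pt x1 x2) := by
    have h3 := ((hasFDerivAt_id (𝕜 := ℝ) (pt x1 x2)).norm_sq).const_mul (Ωell ξ / 2)
    have e : (fun x : Pt => Ωell ξ * ‖x‖ ^ 2 / 2) = fun x => Ωell ξ / 2 * ‖id x‖ ^ 2 := by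
      ext x
      simp only [id]
      ring
    rw [e]
    refine h3.congr_fderiv ?_
    ext v
    simp
    ring
  have h3 := h1.sub h2
  have h4 : HasGradientAt (Ψell ξ) (((1 + Real.tanh ξ) ^ 2)⁻¹ • pt (Real.tanh ξ ^ 2 * x1) x2) (pt x1 x2) := by
    rw [hasGradientAt_iff_hasFDerivAt]
    refine HasFDerivAt.congr_fderiv h3 ?_
    ext v
    have h5 := integral_ker_ellipse hξ hx v
    rw [InnerProductSpace.toDual_apply_apply, smul_pt, inner_pt]
    simp only [ContinuousLinearMap.sub_apply, ContinuousLinearMap.smul_apply, innerSL_apply_apply, smul_eq_mul]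
    rw [h5, inner_pt, Ωell]
    have := Real.pi_pos
    field_simp
    ring
  exact h4.gradient

lemma norm_gradient_Ψ {ξ : ℝ} (hξ : 0 < ξ) (t : ℝ) :
    ‖gradient (Ψell ξ) (gam (Real.tanh ξ) t)‖ =
      Real.tanh ξ / (1 + Real.tanh ξ) ^ 2 * spd (Real.tanh ξ) t := by
  have hb := tanh_pos_of_pos hξ
  have hm : (Real.cos t) ^ 2 + (Real.tanh ξ * Real.sin t / Real.tanh ξ) ^ 2 = 1 :=
    (mem_frontier_iff hξ _).mp (gam_mem hξ t)
  rw [gam, gradient_Ψ hξ hm, smul_pt, norm_pt, spd]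
  set b := Real.tanh ξ
  have : b / (1 + b) ^ 2 = Real.sqrt ((b / (1 + b) ^ 2) ^ 2) := by
    rw [Real.sqrt_sq (by positivity)]
  rw [this, ← Real.sqrt_mul (by positivity)]
  congr 1
  ring


/-- logarithmic kernel on the circle -/
def Fl (r t : ℝ) : ℝ := Real.log ‖(1 : ℂ) - r * Complex.exp (t * Complex.I)‖

lemma Fl_periodic (r : ℝ) : Function.Periodic (Fl r) (2 * π) := by
  intro t
  have : Complex.exp (((t + 2 * π : ℝ) : ℂ) * Complex.I) = Complex.exp (t * Complex.I) := by
    push_cast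
    rw [add_mul, Complex.exp_add, Complex.exp_two_pi_mul_I, mul_one]
  rw [Fl, Fl, this]

lemma norm_sq_one_sub (r t : ℝ) :
    ‖(1 : ℂ) - r * Complex.exp (t * Complex.I)‖ ^ 2 = 1 + r ^ 2 - 2 * r * Real.cos t := by
  rw [Complex.exp_mul_I, ← Complex.ofReal_cos, ← Complex.ofReal_sin, ← Complex.normSq_eq_norm_sq,
    Complex.normSq_apply]
  simp only [Complex.sub_re, Complex.sub_im, Complex.mul_re, Complex.mul_im, Complex.add_re, Complex.add_im,
    Complex.ofReal_re, Complex.ofReal_im, Complex.I_re, Complex.I_im, Complex.one_re, Complex.one_im]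
  nlinarith [Real.sin_sq_add_cos_sq t]

lemma norm_one_sub (r t : ℝ) :
    ‖(1 : ℂ) - r * Complex.exp (t * Complex.I)‖ = Real.sqrt (1 + r ^ 2 - 2 * r * Real.cos t) := by
  rw [← norm_sq_one_sub, Real.sqrt_sq (norm_nonneg _)]

lemma Fl_neg (r t : ℝ) : Fl r (-t) = Fl r t := by
  rw [Fl, Fl, norm_one_sub, norm_one_sub, Real.cos_neg]

lemma Fl_one (t : ℝ) : Fl 1 t = Real.log (2 * |Real.sin (t / 2)|) := by
  rw [Fl, norm_one_sub]
  congr 1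
  have : (2 : ℝ) * |Real.sin (t / 2)| = Real.sqrt ((2 * Real.sin (t / 2)) ^ 2) := by
    rw [Real.sqrt_sq_eq_abs, abs_mul]; simp
  rw [this]
  congr 1
  have h : Real.cos t = 1 - 2 * Real.sin (t / 2) ^ 2 := by
    have h1 := Real.cos_two_mul (t / 2)
    have h2 := Real.sin_sq_add_cos_sq (t / 2)
    rw [mul_div_cancel₀ _ (two_ne_zero)] at h1
    linarith
  rw [h]; ring

lemma Fl_hasSum {r : ℝ} (h0 : 0 ≤ r) (h1 : r < 1) (t : ℝ) :
    HasSum (fun k : ℕ => r ^ k / k * Real.cos (k * t)) (-Fl r t) := by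
  have hz : ‖(r : ℂ) * Complex.exp (t * Complex.I)‖ < 1 := by
    rw [norm_mul, Complex.norm_exp_ofReal_mul_I, mul_one, Complex.norm_real, Real.norm_of_nonneg h0]
    exact h1
  have h := Complex.hasSum_re (Complex.hasSum_taylorSeries_neg_log hz)
  rw [Complex.neg_re, Complex.log_re] at h
  refine h.congr_fun ?_ |> fun h => h
  intro k
  rw [mul_pow, ← Complex.exp_nat_mul, ← mul_assoc]
  have e : ((k : ℂ) * t) = ((k * t : ℝ) : ℂ) := by push_cast; rfl
  rw [e, Complex.exp_mul_I, ← Complex.ofReal_cos, ← Complex.ofReal_sin, ← Complex.ofReal_pow,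
    Complex.div_natCast_re]
  simp only [Complex.mul_re, Complex.mul_im, Complex.add_re, Complex.add_im,
    Complex.ofReal_re, Complex.ofReal_im, Complex.I_re, Complex.I_im]
  ring

lemma int_cos_zero {c : ℤ} (hc : c ≠ 0) : ∫ t in (-π)..π, Real.cos (c * t) = 0 := by
  have hc' : (c : ℝ) ≠ 0 := by exact_mod_cast hc
  rw [intervalIntegral.integral_comp_mul_left (f := Real.cos) hc', integral_cos]
  rw [mul_neg, Real.sin_neg, Real.sin_int_mul_pi]
  simp

lemma int_cos_cos (k n : ℕ) (hk : k ≠ 0) : ∫ t in (-π)..π, Real.cos (k * t) * Real.cos (n * t) =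
    if k = n then π else 0 := by
  have e : ∀ t : ℝ, Real.cos (k * t) * Real.cos (n * t) =
      (Real.cos (((k - n : ℤ) : ℝ) * t) + Real.cos (((k + n : ℤ) : ℝ) * t)) / 2 := by
    intro t
    push_cast
    rw [sub_mul, add_mul, Real.cos_sub, Real.cos_add]; ring
  simp only [e]
  rw [intervalIntegral.integral_div, intervalIntegral.integral_add
    (Continuous.intervalIntegrable (by fun_prop) _ _)
    (Continuous.intervalIntegrable (by fun_prop) _ _), int_cos_zero (c := k + n) (by omega)]
  split_ifs with h
  · subst h; simp
  · rw [int_cos_zero (by omega)]; simp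

/-- Fourier coefficients of the log kernel -/
def Acoef (r : ℝ) (n : ℕ) : ℝ := -(r ^ n / n * π)

lemma Fl_coef_lt {r : ℝ} (h0 : 0 ≤ r) (h1 : r < 1) (n : ℕ) :
    ∫ t in (-π)..π, Fl r t * Real.cos (n * t) = Acoef r n := by
  have hs : Summable fun k : ℕ => r ^ k := summable_geometric_of_lt_one h0 h1
  have h := intervalIntegral.hasSum_integral_of_dominated_convergence (μ := volume) (a := -π) (b := π)
    (F := fun (k : ℕ) t => r ^ k / k * Real.cos (k * t) * Real.cos (n * t))
    (f := fun t => -Fl r t * Real.cos (n * t)) (fun k _ => r ^ k)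
    (fun k => Continuous.aestronglyMeasurable (by fun_prop))
    (fun k => by
      refine Filter.Eventually.of_forall fun t _ => ?_
      rw [norm_mul, norm_mul]
      have hk : ‖r ^ k / (k : ℝ)‖ ≤ r ^ k := by
        rw [Real.norm_of_nonneg (by positivity)]
        rcases Nat.eq_zero_or_pos k with rfl | hk
        · simp
        · exact div_le_self (by positivity) (by exact_mod_cast hk)
      have c1 := Real.abs_cos_le_one (k * t)
      have c2 := Real.abs_cos_le_one (n * t)
      have p : 0 ≤ r ^ k := by positivity
      calc _ ≤ r ^ k * 1 * 1 := by
            gcongr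
            · exact c1
            · exact c2
        _ = _ := by ring)
    (Filter.Eventually.of_forall fun t _ => hs)
    (by simp)
    (Filter.Eventually.of_forall fun t _ => (Fl_hasSum h0 h1 t).mul_right _)
  have e : ∀ k : ℕ, ∫ t in (-π)..π, r ^ k / k * Real.cos (k * t) * Real.cos (n * t) =
      if k = n then r ^ n / n * π else 0 := by
    intro k
    simp only [mul_assoc]
    rw [intervalIntegral.integral_const_mul]
    rcases eq_or_ne k 0 with rfl | hk
    · simp only [Nat.cast_zero, div_zero, zero_mul]
      split_ifs with h
      · subst h; simp
      · rfl
    · rw [int_cos_cos k n hk]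
      split_ifs with h
      · subst h; rfl
      · simp
  simp only [e] at h
  have h2 := h.unique (hasSum_ite_eq n (r ^ n / n * π))
  simp only [neg_mul] at h2
  rw [intervalIntegral.integral_neg] at h2
  rw [Acoef]; linarith

lemma Fl_integrable (r : ℝ) (a b : ℝ) : IntervalIntegrable (Fl r) volume a b := by
  refine (Fl_periodic r).intervalIntegrable₀ (by positivity) ?_ a b
  have h := circleIntegrable_log_norm_sub_const (a := 1) (c := 0) r
  rw [CircleIntegrable] at h
  refine h.congr (fun t _ => ?_)
  simp only [Fl, circleMap]
  rw [norm_sub_rev, zero_add]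

lemma ne_ae : ∀ᵐ t : ℝ, Real.sin (t / 2) ≠ 0 := by
  have : {t : ℝ | Real.sin (t / 2) = 0} ⊆ Set.range (fun n : ℤ => 2 * (n * π)) := by
    intro t ht
    obtain ⟨n, hn⟩ := Real.sin_eq_zero_iff.mp ht
    exact ⟨n, by simp only [hn]; ring⟩
  have h := measure_mono_null this ((Set.countable_range _).measure_zero volume)
  rw [ae_iff]
  simpa using h

lemma Fl_coef {r : ℝ} (h0 : 0 ≤ r) (h1 : r ≤ 1) (n : ℕ) :
    ∫ t in (-π)..π, Fl r t * Real.cos (n * t) = Acoef r n := by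
  rcases lt_or_eq_of_le h1 with h1 | rfl
  · exact Fl_coef_lt h0 h1 n
  have ht : Filter.Tendsto (fun r => ∫ t in (-π)..π, Fl r t * Real.cos (n * t)) (nhdsWithin 1 (Set.Ioo 0 1))
      (nhds (∫ t in (-π)..π, Fl 1 t * Real.cos (n * t))) := by
    refine intervalIntegral.tendsto_integral_filter_of_dominated_convergence
      (fun t => Real.log 2 + |Fl 1 t|) ?_ ?_ ?_ ?_
    · refine Filter.Eventually.of_forall fun r => Measurable.aestronglyMeasurable ?_
      unfold Fl
      fun_prop
    · filter_upwards [self_mem_nhdsWithin] with r hr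
      filter_upwards [ne_ae] with t hs _
      rw [norm_mul]
      have c2 := Real.abs_cos_le_one (n * t)
      refine (mul_le_of_le_one_right (norm_nonneg _) c2).trans ?_
      rw [Real.norm_eq_abs]
      have hp : 0 < ‖(1 : ℂ) - (1 : ℝ) * Complex.exp (t * Complex.I)‖ := by
        rw [norm_one_sub]
        refine Real.sqrt_pos.mpr ?_
        have h1 := Real.cos_two_mul (t / 2)
        have h2 := Real.sin_sq_add_cos_sq (t / 2)
        rw [mul_div_cancel₀ _ (two_ne_zero)] at h1
        have : 0 < Real.sin (t / 2) ^ 2 := by positivity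
        nlinarith
      have he : ‖Complex.exp (t * Complex.I)‖ = 1 := Complex.norm_exp_ofReal_mul_I t
      have hd : ‖((1 : ℂ) - r)‖ = 1 - r := by
        rw [← Complex.ofReal_one, ← Complex.ofReal_sub, Complex.norm_real, Real.norm_of_nonneg (by linarith [hr.2])]
      have l1 : 1 - r ≤ ‖(1 : ℂ) - r * Complex.exp (t * Complex.I)‖ := by
        have := norm_sub_norm_le (1 : ℂ) (r * Complex.exp (t * Complex.I))
        rw [norm_mul, he, Complex.norm_real, Real.norm_of_nonneg hr.1.le] at this
        simpa using this
      have l2 : ‖(1 : ℂ) - (1 : ℝ) * Complex.exp (t * Complex.I)‖ ≤ ‖(1 : ℂ) - r * Complex.exp (t * Complex.I)‖ + (1 - r) := by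
        have e : (1 : ℂ) - (1 : ℝ) * Complex.exp (t * Complex.I) =
          ((1 : ℂ) - r * Complex.exp (t * Complex.I)) - (1 - r) * Complex.exp (t * Complex.I) := by
          push_cast; ring
        rw [e]
        refine (norm_sub_le _ _).trans ?_
        rw [norm_mul, he, hd, mul_one]
      have l3 : ‖(1 : ℂ) - r * Complex.exp (t * Complex.I)‖ ≤ 2 := by
        refine (norm_sub_le _ _).trans ?_
        rw [norm_mul, he, Complex.norm_real, Real.norm_of_nonneg hr.1.le, norm_one]
        linarith [hr.2]
      have l4 : Fl 1 t ≤ Real.log 2 + Fl r t := by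
        rw [Fl, Fl, ← Real.log_mul (by norm_num) (by linarith [hr.2])]
        exact Real.log_le_log hp (by linarith)
      have l5 : Fl r t ≤ Real.log 2 := Real.log_le_log (by linarith [hr.2]) l3
      rw [abs_le]
      constructor
      · linarith [neg_abs_le (Fl 1 t)]
      · linarith [abs_nonneg (Fl 1 t)]
    · exact (intervalIntegrable_const).add (Fl_integrable 1 _ _).abs
    · filter_upwards [ne_ae] with t hs _
      refine Filter.Tendsto.mono_left ?_ nhdsWithin_le_nhds
      have : ContinuousAt (fun r => Fl r t * Real.cos (n * t)) 1 := by
        unfold Fl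
        refine ContinuousAt.mul (ContinuousAt.log (by fun_prop) ?_) continuousAt_const
        rw [norm_one_sub]
        refine (Real.sqrt_pos.mpr ?_).ne'
        have h1 := Real.cos_two_mul (t / 2)
        have h2 := Real.sin_sq_add_cos_sq (t / 2)
        rw [mul_div_cancel₀ _ (two_ne_zero)] at h1
        have : 0 < Real.sin (t / 2) ^ 2 := by positivity
        nlinarith
      exact this
  have ht2 : Filter.Tendsto (fun r => ∫ t in (-π)..π, Fl r t * Real.cos (n * t)) (nhdsWithin 1 (Set.Ioo 0 1))
      (nhds (Acoef 1 n)) := by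
    have hc : Continuous fun r => Acoef r n := by unfold Acoef; fun_prop
    refine (hc.tendsto 1 |>.mono_left nhdsWithin_le_nhds).congr' ?_
    filter_upwards [self_mem_nhdsWithin] with r hr
    exact (Fl_coef_lt hr.1.le hr.2 n).symm
  have : (nhdsWithin (1 : ℝ) (Set.Ioo 0 1)).NeBot := by
    rw [nhdsWithin_Ioo_eq_nhdsLT zero_lt_one]; infer_instance
  exact tendsto_nhds_unique ht ht2


lemma conv_coef {T : ℝ} [hT : Fact (0 < T)] {f g : AddCircle T → ℂ}
    (hf : Integrable f AddCircle.haarAddCircle) (hg : Integrable g AddCircle.haarAddCircle) (n : ℤ) :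
    fourierCoeff (fun x => ∫ t, f t * g (x - t) ∂AddCircle.haarAddCircle) n =
      fourierCoeff f n * fourierCoeff g n := by
  have hb : ∀ {h : AddCircle T → ℂ}, Integrable h AddCircle.haarAddCircle →
      Integrable (fun t => fourier (-n) t * h t) AddCircle.haarAddCircle := by
    intro h hh
    refine hh.bdd_mul (c := 1) (ContinuousMap.continuous _).aestronglyMeasurable
      (Filter.Eventually.of_forall fun t => ?_)
    rw [fourier_apply]
    exact (Circle.norm_coe _).le
  have h := integral_convolution (ContinuousLinearMap.mul ℝ ℂ) (μ := AddCircle.haarAddCircle)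
    (ν := AddCircle.haarAddCircle) (hb hf) (hb hg)
  simp only [convolution_def, ContinuousLinearMap.mul_apply'] at h
  simp only [fourierCoeff, smul_eq_mul]
  rw [← h]
  congr 1
  ext x
  rw [← integral_const_mul]
  congr 1
  ext t
  have e : (fourier (-n) x : ℂ) = fourier (-n) t * fourier (-n) (x - t) := by
    simp only [fourier_apply, smul_sub, ← Circle.coe_mul, ← AddCircle.toCircle_add]
    congr 2; abel
  rw [e]; ring

lemma lift_eq {T : ℝ} [hT : Fact (0 < T)] {f : ℝ → ℂ} (h : Function.Periodic f T) (a : ℝ) :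
    (h.lift : AddCircle T → ℂ) = AddCircle.liftIoc T a f := by
  ext x
  have : ((AddCircle.equivIoc T a x : ℝ) : AddCircle T) = x := (AddCircle.equivIoc T a).symm_apply_apply x
  conv_lhs => rw [← this]
  exact h.lift_coe _

lemma lift_integrable {T : ℝ} [hT : Fact (0 < T)] {f : ℝ → ℂ} (h : Function.Periodic f T) (a : ℝ)
    (hf : IntegrableOn f (Set.Ioc a (a + T))) :
    Integrable (h.lift : AddCircle T → ℂ) AddCircle.haarAddCircle := by
  rw [lift_eq h a, ← memLp_one_iff_integrable, memLp_haarAddCircle_iff]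
  exact MemLp.memLp_liftIoc (memLp_one_iff_integrable.mpr hf)

lemma circle_unique {T : ℝ} [hT : Fact (0 < T)] {f g : AddCircle T → ℂ}
    (hf : Continuous f) (hg : Integrable g AddCircle.haarAddCircle) (κ : ℂ)
    (heq : ∀ x, f x + κ * ∫ t, f t * g (x - t) ∂AddCircle.haarAddCircle = 0)
    (hn : ∀ n, 1 + κ * fourierCoeff g n ≠ 0) (x : AddCircle T) : f x = 0 := by
  have hfi : Integrable f AddCircle.haarAddCircle := by
    have := hf.continuousOn.integrableOn_compact (μ := AddCircle.haarAddCircle) (isCompact_univ (X := AddCircle T))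
    rwa [integrableOn_univ] at this
  have hz : ∀ n, fourierCoeff f n = 0 := by
    intro n
    have e : f = fun x => (-κ) * ∫ t, f t * g (x - t) ∂AddCircle.haarAddCircle := by
      ext x
      linear_combination heq x
    have h2 : fourierCoeff f n = -κ * (fourierCoeff f n * fourierCoeff g n) := by
      conv_lhs => rw [e]
      rw [fourierCoeff.const_mul, conv_coef hfi hg]
    have h3 : fourierCoeff f n * (1 + κ * fourierCoeff g n) = 0 := by linear_combination h2
    exact (mul_eq_zero.mp h3).resolve_right (hn n)
  have hz2 : fourierCoeff (⟨f, hf⟩ : C(AddCircle T, ℂ)) = fun _ => 0 := by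
    ext n; exact hz n
  have h := has_pointwise_sum_fourier_series_of_summable (f := (⟨f, hf⟩ : C(AddCircle T, ℂ)))
    (by rw [hz2]; exact summable_zero) x
  rw [hz2] at h
  simp only [zero_smul] at h
  exact h.unique hasSum_zero

lemma int_unique {G g : ℝ → ℝ} (hG : Function.Periodic G (2 * π)) (hg : Function.Periodic g (2 * π))
    (hGi : IntervalIntegrable G volume (-π) π) (hgc : Continuous g) (hGe : ∀ t, G (-t) = G t) (κ : ℝ)
    (heq : ∀ x, g x + κ * (1 / (2 * π) * ∫ t in (-π)..π, g t * G (x - t)) = 0)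
    (hn : ∀ n : ℕ, 1 + κ * (1 / (2 * π) * ∫ t in (-π)..π, G t * Real.cos (n * t)) ≠ 0) (x : ℝ) : g x = 0 := by
  have hT : Fact (0 < 2 * π) := ⟨Real.two_pi_pos⟩
  have hpi := Real.pi_pos
  have hg' : Function.Periodic (fun t => (g t : ℂ)) (2 * π) := fun t => by
    simp only; rw [hg t]
  have hG' : Function.Periodic (fun t => (G t : ℂ)) (2 * π) := fun t => by
    simp only; rw [hG t]
  have hend : (-π) + 2 * π = π := by ring
  have hle : -π ≤ π := by linarith
  have hint := (intervalIntegrable_iff_integrableOn_Ioc_of_le hle).mp hGi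
  have hc : Continuous (hg'.lift : AddCircle (2 * π) → ℂ) :=
    Continuous.quotient_liftOn' (by fun_prop) _
  have hi := lift_integrable hG' (-π) (by rw [hend]; exact hint.ofReal)
  have key := circle_unique hc hi (κ : ℂ) ?_ ?_ (x : AddCircle (2 * π))
  · rw [hg'.lift_coe] at key
    exact_mod_cast key
  · intro y
    induction y using QuotientAddGroup.induction_on with | _ y => ?_
    rw [AddCircle.integral_haarAddCircle, ← AddCircle.intervalIntegral_preimage (2 * π) (-π), hend]
    have e : ∀ t : ℝ, (hg'.lift : AddCircle (2 * π) → ℂ) t * (hG'.lift : AddCircle (2 * π) → ℂ) ((y : AddCircle (2 * π)) - t) = ((g t * G (y - t) : ℝ) : ℂ) := by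
      intro t
      have : (hG'.lift : AddCircle (2 * π) → ℂ) ((y : AddCircle (2 * π)) - t) = (G (y - t) : ℂ) := hG'.lift_coe (y - t)
      rw [this, hg'.lift_coe]
      push_cast; rfl
    simp only [e]
    rw [intervalIntegral.integral_ofReal, hg'.lift_coe]
    have := heq y
    rw [← Complex.ofReal_zero, ← this, Complex.real_smul]
    push_cast
    ring
  · intro n
    rw [fourierCoeff_eq_intervalIntegral _ n (-π), hend]
    have e : ∀ t : ℝ, fourier (-n) (t : AddCircle (2 * π)) • (hG'.lift : AddCircle (2 * π) → ℂ) t =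
      ((G t * Real.cos (n.natAbs * t) : ℝ) : ℂ) - ((G t * Real.sin (n * t) : ℝ) : ℂ) * Complex.I := by
      intro t
      rw [hG'.lift_coe, fourier_coe_apply]
      have e1 : (2 * π * Complex.I * ((-n : ℤ) : ℂ) * t / ((2 * π : ℝ) : ℂ)) = ((-(n * t) : ℝ) : ℂ) * Complex.I := by
        have : (π : ℂ) ≠ 0 := by exact_mod_cast hpi.ne'
        push_cast
        field_simp
      have e2 : Real.cos (n.natAbs * t) = Real.cos (n * t) := by
        have : ((n.natAbs : ℕ) : ℝ) = |(n : ℝ)| := by rw [Nat.cast_natAbs]; simp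
        rw [this]
        rcases abs_choice (n : ℝ) with h | h <;> rw [h]
        rw [neg_mul, Real.cos_neg]
      rw [e1, Complex.exp_mul_I, ← Complex.ofReal_cos, ← Complex.ofReal_sin, Real.cos_neg, Real.sin_neg, e2, smul_eq_mul]
      push_cast
      ring
    simp only [e]
    have i1 : IntervalIntegrable (fun t => G t * Real.cos (n.natAbs * t)) volume (-π) π :=
      hGi.mul_continuousOn (by fun_prop)
    have i2 : IntervalIntegrable (fun t => G t * Real.sin (n * t)) volume (-π) π :=
      hGi.mul_continuousOn (by fun_prop)
    have hodd : ∫ t in (-π)..π, G t * Real.sin (n * t) = 0 := by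
      have := intervalIntegral.integral_comp_neg (a := -π) (b := π) (fun t => G t * Real.sin (n * t))
      simp only [hGe, mul_neg, Real.sin_neg, neg_neg] at this
      rw [intervalIntegral.integral_neg] at this
      linarith
    have j1 : IntervalIntegrable (fun t => ((G t * Real.cos (n.natAbs * t) : ℝ) : ℂ)) volume (-π) π :=
      ⟨i1.1.ofReal, i1.2.ofReal⟩
    have j2 : IntervalIntegrable (fun t => ((G t * Real.sin (n * t) : ℝ) : ℂ)) volume (-π) π :=
      ⟨i2.1.ofReal, i2.2.ofReal⟩
    rw [intervalIntegral.integral_sub j1 (j2.mul_const _), intervalIntegral.integral_mul_const,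
      intervalIntegral.integral_ofReal, intervalIntegral.integral_ofReal, hodd]
    have := hn n.natAbs
    rw [Complex.ofReal_zero, zero_mul, sub_zero, Complex.real_smul, ← Complex.ofReal_mul, ← Complex.ofReal_mul]
    exact_mod_cast this


/-- the nome-like parameter -/
def qell (ξ : ℝ) : ℝ := (1 - Real.tanh ξ) / (1 + Real.tanh ξ)

/-- the even convolution kernel -/
def Gk (ξ t : ℝ) : ℝ := Fl 1 t + Real.log ((1 + Real.tanh ξ) / 2) + Fl (qell ξ) t

/-- symbol of the convolution operator -/
def symb (ξ : ℝ) (n : ℕ) : ℝ :=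
  1 + (1 + Real.tanh ξ) ^ 2 / Real.tanh ξ * (1 / (2 * π) * ∫ t in (-π)..π, Gk ξ t * Real.cos (n * t))

lemma qell_pos {ξ : ℝ} (hξ : 0 < ξ) : 0 < qell ξ := by
  have := tanh_pos_of_pos hξ
  have := tanh_lt_one' ξ
  exact div_pos (by linarith) (by linarith)

lemma qell_lt_one {ξ : ℝ} (hξ : 0 < ξ) : qell ξ < 1 := by
  have := tanh_pos_of_pos hξ
  rw [qell, div_lt_one (by linarith)]
  linarith

lemma qell_injOn : Set.InjOn qell (Set.Ioi 0) := by
  intro x hx y hy h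
  have h1 := tanh_pos_of_pos hx
  have h2 := tanh_pos_of_pos hy
  have h3 : (1 - Real.tanh x) / (1 + Real.tanh x) = (1 - Real.tanh y) / (1 + Real.tanh y) := h
  rw [div_eq_div_iff (by linarith) (by linarith)] at h3
  exact Real.tanh_injective (by linarith)

lemma Gk_integrable (ξ a b : ℝ) : IntervalIntegrable (Gk ξ) volume a b :=
  ((Fl_integrable 1 a b).add intervalIntegrable_const).add (Fl_integrable _ a b)

lemma Gk_coef {ξ : ℝ} (hξ : 0 < ξ) (n : ℕ) : ∫ t in (-π)..π, Gk ξ t * Real.cos (n * t) =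
    Acoef 1 n + Acoef (qell ξ) n + Real.log ((1 + Real.tanh ξ) / 2) * ∫ t in (-π)..π, Real.cos (n * t) := by
  rw [← Fl_coef zero_le_one le_rfl n, ← Fl_coef (qell_pos hξ).le (qell_lt_one hξ).le n,
    ← intervalIntegral.integral_const_mul]
  have i1 : ∀ r, IntervalIntegrable (fun t => Fl r t * Real.cos (n * t)) volume (-π) π := fun r =>
    (Fl_integrable r _ _).mul_continuousOn (by fun_prop)
  have i2 : IntervalIntegrable (fun t => Real.log ((1 + Real.tanh ξ) / 2) * Real.cos (n * t)) volume (-π) π :=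
    Continuous.intervalIntegrable (by fun_prop) _ _
  rw [← intervalIntegral.integral_add (i1 _) (i1 _), ← intervalIntegral.integral_add ((i1 _).add (i1 _)) i2]
  congr 1
  ext t
  rw [Gk]; ring

lemma kap_eq {ξ : ℝ} (hξ : 0 < ξ) : (1 + Real.tanh ξ) ^ 2 / Real.tanh ξ = 4 / (1 - qell ξ ^ 2) := by
  have h1 := tanh_pos_of_pos hξ
  have : 1 - qell ξ ^ 2 = 4 * Real.tanh ξ / (1 + Real.tanh ξ) ^ 2 := by
    rw [qell]; field_simp; ring
  rw [this]; field_simp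

lemma bad_pos {ξ : ℝ} (hξ : 0 < ξ) {n : ℕ} (hn : n ≠ 0) (h : symb ξ n = 0) :
    n * (1 - qell ξ ^ 2) - 2 * (1 + qell ξ ^ n) = 0 := by
  have hc := int_cos_zero (c := n) (by exact_mod_cast hn)
  rw [Int.cast_natCast] at hc
  rw [symb, Gk_coef hξ, kap_eq hξ, hc, Acoef, Acoef] at h
  have hq : 1 - qell ξ ^ 2 ≠ 0 := by nlinarith [qell_pos hξ, qell_lt_one hξ]
  have hpi := Real.pi_pos
  have hn' : (n : ℝ) ≠ 0 := by exact_mod_cast hn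
  field_simp at h
  simp only [one_pow] at h
  have h2 : (2 * π) * (n * (1 - qell ξ ^ 2) - 2 * (1 + qell ξ ^ n)) = 0 := by linear_combination h
  exact (mul_eq_zero.mp h2).resolve_left (by positivity)

lemma bad_zero {ξ : ℝ} (hξ : 0 < ξ) (h : symb ξ 0 = 0) :
    1 - qell ξ ^ 2 = 4 * Real.log (1 + qell ξ) := by
  have h1 := tanh_pos_of_pos hξ
  have e : (1 + Real.tanh ξ) / 2 = (1 + qell ξ)⁻¹ := by
    rw [qell]; field_simp; ring
  rw [symb, Gk_coef hξ, kap_eq hξ, Acoef, Acoef, e, Real.log_inv] at h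
  have hq : 1 - qell ξ ^ 2 ≠ 0 := by nlinarith [qell_pos hξ, qell_lt_one hξ]
  have hpi := Real.pi_pos
  simp at h
  field_simp at h
  linear_combination h / 2

/-- the exceptional set -/
def badset : Set ℝ := ⋃ n : ℕ, {ξ | 0 < ξ ∧ symb ξ n = 0}

lemma bad_countable : badset.Countable := by
  refine Set.countable_iUnion fun n => ?_
  rcases eq_or_ne n 0 with rfl | hn
  · refine Set.Subsingleton.countable ?_
    rintro x ⟨hx, h1⟩ y ⟨hy, h2⟩
    have e1 := bad_zero hx h1
    have e2 := bad_zero hy h2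
    refine qell_injOn hx hy ?_
    have p1 := qell_pos hx
    have p2 := qell_pos hy
    rcases lt_trichotomy (qell x) (qell y) with h | h | h
    · have := Real.log_lt_log (by linarith) (by linarith : 1 + qell x < 1 + qell y)
      nlinarith
    · exact h
    · have := Real.log_lt_log (by linarith) (by linarith : 1 + qell y < 1 + qell x)
      nlinarith
  · set p : Polynomial ℝ := Polynomial.C (n : ℝ) * (1 - Polynomial.X ^ 2) - 2 * (1 + Polynomial.X ^ n) with hp
    have hp0 : p ≠ 0 := by
      intro h
      have := congrArg (Polynomial.eval 1) h
      simp [hp] at this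
    have hfin : {x | p.IsRoot x}.Finite := Polynomial.finite_setOf_isRoot hp0
    refine Set.MapsTo.countable_of_injOn (f := qell) (t := {x | p.IsRoot x}) ?_ ?_ hfin.countable
    · rintro x ⟨hx, h1⟩
      have := bad_pos hx hn h1
      change Polynomial.eval (qell x) p = 0
      rw [hp]
      simpa using this
    · exact qell_injOn.mono fun x hx => hx.1

lemma log_norm_gam {ξ : ℝ} (hξ : 0 < ξ) {s t : ℝ} (h : Real.sin ((s - t) / 2) ≠ 0) :
    Real.log ‖gam (Real.tanh ξ) s - gam (Real.tanh ξ) t‖ =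
      Fl 1 (s - t) + Real.log ((1 + Real.tanh ξ) / 2) + Fl (qell ξ) (s + t) := by
  have hb := tanh_pos_of_pos hξ
  have e : spd (Real.tanh ξ) ((s + t) / 2) =
      (1 + Real.tanh ξ) / 2 * ‖(1 : ℂ) - qell ξ * Complex.exp ((s + t : ℝ) * Complex.I)‖ := by
    rw [norm_one_sub, spd]
    have h2 : (1 + Real.tanh ξ) / 2 = Real.sqrt (((1 + Real.tanh ξ) / 2) ^ 2) := by
      rw [Real.sqrt_sq (by positivity)]
    rw [h2, ← Real.sqrt_mul (by positivity)]
    congr 1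
    have h3 := Real.cos_two_mul ((s + t) / 2)
    rw [mul_div_cancel₀ _ (two_ne_zero)] at h3
    rw [h3, Real.sin_sq, qell]
    field_simp
    ring
  have hs := spd_pos hb ((s + t) / 2)
  rw [norm_gam_sub, Real.log_mul (by positivity) hs.ne', ← Fl_one, e, Real.log_mul (by positivity)]
  · rw [Fl, Fl]; ring
  · intro h0
    rw [h0, mul_zero] at e
    exact hs.ne' e

lemma gam_periodic (b : ℝ) : Function.Periodic (gam b) (2 * π) := by
  intro t
  rw [gam, gam, Real.cos_add_two_pi, Real.sin_add_two_pi]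

lemma ne_ae_sub (s : ℝ) : ∀ᵐ t : ℝ, Real.sin ((s - t) / 2) ≠ 0 :=
  (Measure.measurePreserving_sub_left volume s).quasiMeasurePreserving.ae ne_ae

lemma kernel_eq {ξ : ℝ} (hξ : 0 < ξ) {g : ℝ → ℝ} (hg : Continuous g) (hge : ∀ t, g (-t) = g t) (s : ℝ) :
    ∫ t in (-π)..π, g t * Real.log ‖gam (Real.tanh ξ) s - gam (Real.tanh ξ) t‖ =
      ∫ t in (-π)..π, g t * Gk ξ (s - t) := by
  have i1 : ∀ r, IntervalIntegrable (fun t => g t * Fl r (s - t)) volume (-π) π := fun r => by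
    have h := (Fl_integrable r (s + π) (s - π)).comp_sub_left s
    simp only [sub_add_cancel_left, sub_sub_cancel] at h
    exact h.continuousOn_mul hg.continuousOn
  have i2 : IntervalIntegrable (fun t => g t * Fl (qell ξ) (s + t)) volume (-π) π := by
    have h := (Fl_integrable (qell ξ) (s - π) (s + π)).comp_add_left s
    simp only [add_sub_cancel_left, sub_sub_cancel_left] at h
    exact h.continuousOn_mul hg.continuousOn
  have i3 : IntervalIntegrable (fun t => g t * Real.log ((1 + Real.tanh ξ) / 2)) volume (-π) π :=
    Continuous.intervalIntegrable (by fun_prop) _ _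
  have e1 : ∫ t in (-π)..π, g t * Real.log ‖gam (Real.tanh ξ) s - gam (Real.tanh ξ) t‖ =
      ∫ t in (-π)..π, (g t * Fl 1 (s - t) + g t * Real.log ((1 + Real.tanh ξ) / 2)) + g t * Fl (qell ξ) (s + t) := by
    refine intervalIntegral.integral_congr_ae ?_
    filter_upwards [ne_ae_sub s] with t ht _
    rw [log_norm_gam hξ ht]; ring
  have e2 : ∫ t in (-π)..π, g t * Fl (qell ξ) (s + t) = ∫ t in (-π)..π, g t * Fl (qell ξ) (s - t) := by
    have h := intervalIntegral.integral_comp_neg (a := -π) (b := π) (fun t => g t * Fl (qell ξ) (s - t))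
    simp only [hge, sub_neg_eq_add, neg_neg] at h
    exact h
  rw [e1, intervalIntegral.integral_add ((i1 1).add i3) i2, e2,
    ← intervalIntegral.integral_add ((i1 1).add i3) (i1 _)]
  congr 1
  ext t
  rw [Gk]; ring

/-- **Nondegeneracy on Kirchhoff stream functions, II**: away from an at most
countable set of parameters `ξ`, the only symmetric continuous solution of the
kernel equation on `Σ^ξ` is zero. -/
theorem kirchhoff_nondegeneracy :
    ∃ 𝒩 : Set ℝ, 𝒩.Countable ∧ 𝒩 ⊆ Set.Ioi 0 ∧
      ∀ ξ : ℝ, 0 < ξ → ξ ∉ 𝒩 →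
        ∀ φ : Pt → ℝ, ContinuousOn φ (frontier (Eell ξ)) →
          (∀ x ∈ frontier (Eell ξ),
            φ x = φ (pt (x 0) (-(x 1))) ∧ φ x = φ (pt (-(x 0)) (-(x 1)))) →
          (∀ x ∈ frontier (Eell ξ),
            φ x + ∫ y in frontier (Eell ξ),
              (1 / (2 * π)) * Real.log ‖x - y‖ * (φ y / ‖gradient (Ψell ξ) y‖) ∂μH[1] = 0) →
          ∀ x ∈ frontier (Eell ξ), φ x = 0 := by
  refine ⟨badset, bad_countable, ?_, ?_⟩
  · intro x hx
    obtain ⟨n, hn⟩ := Set.mem_iUnion.mp hx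
    exact hn.1
  intro ξ hξ hbad φ hφ hsym heq x hx
  have hb := tanh_pos_of_pos hξ
  have hpi := Real.pi_pos
  have hgc : Continuous fun t => φ (gam (Real.tanh ξ) t) :=
    hφ.comp_continuous (continuous_gam _) (gam_mem hξ)
  have hge : ∀ t, φ (gam (Real.tanh ξ) (-t)) = φ (gam (Real.tanh ξ) t) := by
    intro t
    rw [(hsym _ (gam_mem hξ t)).1]
    simp only [gam, pt_zero, pt_one, Real.cos_neg, Real.sin_neg, mul_neg]
  have hgp : Function.Periodic (fun t => φ (gam (Real.tanh ξ) t)) (2 * π) := fun t => by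
    simp only; rw [gam_periodic]
  have hGp : Function.Periodic (Gk ξ) (2 * π) := fun t => by
    rw [Gk, Gk, Fl_periodic, Fl_periodic]
  have key := int_unique hGp hgp (Gk_integrable ξ _ _) hgc (fun t => by rw [Gk, Gk, Fl_neg, Fl_neg])
    ((1 + Real.tanh ξ) ^ 2 / Real.tanh ξ) ?_ ?_ (ang (Real.tanh ξ) x)
  · rwa [gam_ang hξ hx] at key
  · intro s
    have h := heq _ (gam_mem hξ s)
    have e : ∀ t, spd (Real.tanh ξ) t * (1 / (2 * π) * Real.log ‖gam (Real.tanh ξ) s - gam (Real.tanh ξ) t‖ *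
        (φ (gam (Real.tanh ξ) t) / ‖gradient (Ψell ξ) (gam (Real.tanh ξ) t)‖)) =
        ((1 + Real.tanh ξ) ^ 2 / Real.tanh ξ * (1 / (2 * π))) *
          (φ (gam (Real.tanh ξ) t) * Real.log ‖gam (Real.tanh ξ) s - gam (Real.tanh ξ) t‖) := by
      intro t
      have hs := spd_pos hb t
      rw [norm_gradient_Ψ hξ]
      field_simp
    rw [integral_ellipse hξ] at h
    · simp only [e, Iv] at h
      rw [integral_const_mul, ← intervalIntegral.integral_of_le (by linarith),
        kernel_eq hξ hgc hge s, mul_assoc] at h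
      exact h
    · have m1 := (continuous_gam (Real.tanh ξ)).measurable
      have m2 := (continuous_spd (Real.tanh ξ)).measurable
      simp only [norm_gradient_Ψ hξ]
      refine Measurable.aestronglyMeasurable ?_
      exact ((((measurable_const.sub m1).norm.log).const_mul _)).mul
        (hgc.measurable.div (m2.const_mul _))
  · intro n hn
    exact hbad (Set.mem_iUnion.mpr ⟨n, hξ, hn⟩)
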